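/- (Theorem 1: local Hölder stability for the inverse drift problem.) Fix a bounded continuous function p : closure(Ω) → ℝ and functions a₁, …, a_n ∈ C¹(closure(Ω)) such that the n×n matrix with columns ∇a₁(x), …, ∇a_n(x) is invertible for every x ∈ closure(Ω). Then there exists a graph-type subdomain D with D ⊂ Ω and 0 ∈ ∂D ∩ ∂Ω (independent of M₀, H₁, H₂ below), and for every M₀ > 0 there exist constants C > 0 and θ ∈ (0,1), such that the following holds: whenever H₁, H₂ ∈ 𝓗 and, for j = 1,2 and k = 1,…,n, u_{j,k} : closure(Ω) × [0,T] → ℝ are functions such that u_{j,k} and ∂_t u_{j,k} are C¹ on closure(Ω) × [0,T], u_{j,k} satisfies ∂_t u_{j,k} + ⟨H_j(x), ∇_x u_{j,k}⟩ + p(x) u_{j,k} = 0 on Ω × (0,T) and u_{j,k}(x,0) = a_k(x) on Ω, and ∫₀^T (sup_{x∈Ω} |∇_x ∂_t u_{j,k}(x,t)|)² dt ≤ M₀², one has (∫_D |H₁(x) − H₂(x)|² dx)^{1/2} ≤ C ( Σ_{k=1}^n ‖∂_t u_{1,k} − ∂_t u_{2,k}‖_{L²(Γ×(0,T))}^θ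 + Σ_{k=1}^n ‖∂_t u_{1,k} − ∂_t u_{2,k}‖_{L²(Γ×(0,T))} ). -/

import Mathlib

noncomputable section

open MeasureTheory Metric Set
open scoped RealInnerProductSpace

abbrev Esp (n : ℕ) : Type := EuclideanSpace ℝ (Fin n)

/-- The point `(x', xₙ) ∈ ℝ^{d+1} = ℝ^d × ℝ`. -/
noncomputable def graphMk (d : ℕ) (x' : Esp d) (xn : ℝ) : Esp (d+1) :=
  (EuclideanSpace.equiv (Fin (d+1)) ℝ).symm
    (Fin.snoc (⇑(EuclideanSpace.equiv (Fin d) ℝ) x') xn)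

/-- `H` is `(M, δ₀)`-admissible on the compact set `K`. -/
def IsAdmissible {n : ℕ} (M δ₀ : ℝ) (K : Set (Esp n)) (H : Esp n → Esp n) : Prop :=
  ∃ U : Set (Esp n), IsOpen U ∧ Convex ℝ U ∧ K ⊆ U ∧ ContDiffOn ℝ 1 H U ∧
    (∀ x ∈ U, ‖H x‖ ≤ M) ∧ (∀ x ∈ U, ‖fderiv ℝ H x‖ ≤ M) ∧ (∀ x ∈ K, δ₀ < ‖H x‖)

/-- `ψ_H(x) = ⟨x, H(x)⟩`. -/
noncomputable def psiW {n : ℕ} (H : Esp n → Esp n) (x : Esp n) : ℝ := ⟪x, H x⟫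

/-- The Carleman weight `φ_H(x,t) = -βt + ψ_H(x)`. -/
noncomputable def phiW {n : ℕ} (β : ℝ) (H : Esp n → Esp n) (x : Esp n) (t : ℝ) : ℝ :=
  -(β * t) + psiW H x

/-- Outward unit normal `ν₁` of the upper graph `xₙ = ℓ(x')`. -/
noncomputable def nuUp (d : ℕ) (ℓ : Esp d → ℝ) (x' : Esp d) : Esp (d+1) :=
  (Real.sqrt (1 + ‖gradient ℓ x'‖ ^ 2))⁻¹ • graphMk d (-(gradient ℓ x')) 1

/-- Outward unit normal `ν₂` of the lower graph `xₙ = m(x')`. -/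
noncomputable def nuDown (d : ℕ) (m : Esp d → ℝ) (x' : Esp d) : Esp (d+1) :=
  (Real.sqrt (1 + ‖gradient m x'‖ ^ 2))⁻¹ • graphMk d (gradient m x') (-1)

/-- Area element `ω(x') = √(1 + |∇m(x')|²)` of the graph of `m`. -/
noncomputable def omegaW (d : ℕ) (m : Esp d → ℝ) (x' : Esp d) : ℝ :=
  Real.sqrt (1 + ‖gradient m x'‖ ^ 2)

/-- The graph domain `D = {(x', xₙ) : |x'| < ρ₁, ℓ(x') − ℓ̃(x') < xₙ < ℓ(x')}`. -/
def graphDomain (d : ℕ) (ρ₁ : ℝ) (ℓ ℓt : Esp d → ℝ) : Set (Esp (d+1)) :=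
  {x | ∃ x' : Esp d, ∃ xn : ℝ, ‖x'‖ < ρ₁ ∧ ℓ x' - ℓt x' < xn ∧ xn < ℓ x' ∧
    x = graphMk d x' xn}


open scoped Topology

section LocalDerivatives

variable {E F : Type*} [NormedAddCommGroup E] [NormedSpace ℝ E]
  [NormedAddCommGroup F] [NormedSpace ℝ F]

/-- A `C¹` function on an arbitrary set has, near each point of the set, a continuous choice of
derivatives within the set. -/
theorem ContDiffOn.exists_local_deriv {f : E → F} {K : Set E} (hf : ContDiffOn ℝ 1 f K)
    {x : E} (hx : x ∈ K) :
    ∃ V : Set E, IsOpen V ∧ x ∈ V ∧ ∃ f' : E → E →L[ℝ] F,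
      (∀ y ∈ V ∩ K, HasFDerivWithinAt f (f' y) K y) ∧ ContinuousOn f' (V ∩ K) := by
  have h1 : ContDiffOn ℝ (0 + 1) f K := by simpa using hf
  obtain ⟨u, hu, -, f', hf', hc⟩ :=
    (contDiffOn_succ_iff_hasFDerivWithinAt (by simp)).1 h1 x hx
  rw [insert_eq_of_mem hx] at hu
  obtain ⟨V, hVo, hxV, hVu⟩ := mem_nhdsWithin.1 hu
  refine ⟨V, hVo, hxV, f', fun y hy => ?_, hc.continuousOn.mono hVu⟩
  have h2 := (hf' y (hVu hy)).mono hVu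
  rwa [inter_comm, hasFDerivWithinAt_inter (hVo.mem_nhds hy.1)] at h2

/-- The derivative of a `C¹` function on a compact set is bounded in the interior. -/
theorem ContDiffOn.exists_bound_fderiv_interior {f : E → F} {K : Set E} (hK : IsCompact K)
    (hf : ContDiffOn ℝ 1 f K) : ∃ C : ℝ, ∀ y ∈ interior K, ‖fderiv ℝ f y‖ ≤ C := by
  have h : ∃ C : ℝ, ∀ y ∈ K ∩ interior K, ‖fderiv ℝ f y‖ ≤ C := by
    refine hK.induction_on (p := fun s => ∃ C : ℝ, ∀ y ∈ s ∩ interior K, ‖fderiv ℝ f y‖ ≤ C)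
      ⟨0, by simp⟩ ?_ ?_ ?_
    · rintro s t hst ⟨C, hC⟩
      exact ⟨C, fun y hy => hC y ⟨hst hy.1, hy.2⟩⟩
    · rintro s t ⟨C, hC⟩ ⟨D, hD⟩
      refine ⟨max C D, ?_⟩
      rintro y ⟨hy | hy, hyK⟩
      · exact (hC y ⟨hy, hyK⟩).trans (le_max_left _ _)
      · exact (hD y ⟨hy, hyK⟩).trans (le_max_right _ _)
    · intro x hx
      obtain ⟨V, hVo, hxV, f', hf', hc⟩ := hf.exists_local_deriv hx
      have h1 : ∀ᶠ y in 𝓝[V ∩ K] x, ‖f' y‖ < ‖f' x‖ + 1 :=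
        (hc x ⟨hxV, hx⟩).norm.eventually (gt_mem_nhds (by linarith))
      rw [inter_comm, nhdsWithin_inter_of_mem' (mem_nhdsWithin_of_mem_nhds (hVo.mem_nhds hxV))]
        at h1
      refine ⟨{y | ‖f' y‖ < ‖f' x‖ + 1} ∩ (V ∩ K), Filter.inter_mem h1
        (Filter.inter_mem (mem_nhdsWithin_of_mem_nhds (hVo.mem_nhds hxV)) self_mem_nhdsWithin),
        ‖f' x‖ + 1, ?_⟩
      rintro y ⟨⟨hy, hyV, hyK⟩, hyi⟩
      have h2 := (hf' y ⟨hyV, hyK⟩).hasFDerivAt (mem_interior_iff_mem_nhds.1 hyi)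
      rw [h2.fderiv]
      exact hy.le
  obtain ⟨C, hC⟩ := h
  exact ⟨C, fun y hy => hC y ⟨interior_subset hy, hy⟩⟩

end LocalDerivatives

section Slab

variable {d : ℕ} {η T ρ : ℝ} {f : (Esp d × ℝ) × ℝ → ℝ}

/-- Lebesgue measure on `ℝ^d × (-η, 0) × (0, T)`. -/
def slabMeasure (d : ℕ) (η T : ℝ) : Measure ((Esp d × ℝ) × ℝ) :=
  ((volume : Measure (Esp d)).prod (volume.restrict (Ioo (-η) 0))).prod
    (volume.restrict (Ioo 0 T))

theorem slabMeasure_eq (d : ℕ) (η T : ℝ) :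
    slabMeasure d η T = volume.restrict ((univ ×ˢ Ioo (-η) 0) ×ˢ Ioo 0 T) := by
  have h := Measure.prod_restrict (μ := (volume : Measure (Esp d)))
    (ν := (volume : Measure ℝ)) univ (Ioo (-η) 0)
  rw [Measure.restrict_univ] at h
  rw [slabMeasure, h, Measure.prod_restrict]
  rfl

theorem slab_halfspace_eq (d : ℕ) (η : ℝ) :
    (volume : Measure (Esp d)).prod (volume.restrict (Ioo (-η) 0)) =
      volume.restrict (univ ×ˢ Ioo (-η) 0) := by
  have h := Measure.prod_restrict (μ := (volume : Measure (Esp d)))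
    (ν := (volume : Measure ℝ)) univ (Ioo (-η) 0)
  rw [Measure.restrict_univ] at h
  exact h

/-- `f` is `C¹` on a closed cylinder and vanishes away from its lateral core. -/
structure SlabSmooth (ρ η T : ℝ) (f : (Esp d × ℝ) × ℝ → ℝ) : Prop where
  contDiffOn : ContDiffOn ℝ 1 f ((closedBall 0 ρ ×ˢ Icc (-η) 0) ×ˢ Icc 0 T)
  pos : 0 < ρ
  lt_sq : η < ρ ^ 2
  eq_zero : ∀ x s t, s ∈ Icc (-η) 0 → t ∈ Icc 0 T → η ≤ ‖x‖ ^ 2 → f ((x, s), t) = 0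

namespace SlabSmooth

theorem lt_norm_sq (hf : SlabSmooth ρ η T f) {x : Esp d} (hx : ρ ≤ ‖x‖) : η < ‖x‖ ^ 2 :=
  hf.lt_sq.trans_le (pow_le_pow_left₀ hf.pos.le hx 2)

theorem continuousOn (hf : SlabSmooth ρ η T f) :
    ContinuousOn f ((univ ×ˢ Icc (-η) 0) ×ˢ Icc 0 T) := by
  rintro ⟨⟨x, s⟩, t⟩ ⟨⟨-, hs⟩, ht⟩
  by_cases hx : ‖x‖ < ρ
  · have h1 := hf.contDiffOn.continuousOn ((x, s), t)
      ⟨⟨mem_closedBall_zero_iff.2 hx.le, hs⟩, ht⟩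
    refine h1.mono_of_mem_nhdsWithin ?_
    have h2 : {z : (Esp d × ℝ) × ℝ | ‖z.1.1‖ < ρ} ∈ 𝓝 ((x, s), t) :=
      (isOpen_lt (by fun_prop) (by fun_prop)).mem_nhds hx
    filter_upwards [mem_nhdsWithin_of_mem_nhds h2, self_mem_nhdsWithin] with z hz hz'
    exact ⟨⟨mem_closedBall_zero_iff.2 (le_of_lt hz), hz'.1.2⟩, hz'.2⟩
  · have h2 : {z : (Esp d × ℝ) × ℝ | η < ‖z.1.1‖ ^ 2} ∈ 𝓝 ((x, s), t) :=
      (isOpen_lt (by fun_prop) (by fun_prop)).mem_nhds (hf.lt_norm_sq (not_lt.1 hx))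
    have h3 : f =ᶠ[𝓝[(univ ×ˢ Icc (-η) 0) ×ˢ Icc 0 T] ((x, s), t)] fun _ => 0 := by
      filter_upwards [mem_nhdsWithin_of_mem_nhds h2, self_mem_nhdsWithin] with z hz hz'
      exact hf.eq_zero z.1.1 z.1.2 z.2 hz'.1.2 hz'.2 (le_of_lt hz)
    exact continuousWithinAt_const.congr_of_eventuallyEq h3
      (hf.eq_zero x s t hs ht (hf.lt_norm_sq (not_lt.1 hx)).le)

theorem eventuallyEq_zero (hf : SlabSmooth ρ η T f) {x : Esp d} {s t : ℝ} (hx : ρ ≤ ‖x‖)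
    (hs : s ∈ Ioo (-η) 0) (ht : t ∈ Ioo 0 T) : f =ᶠ[𝓝 ((x, s), t)] fun _ => 0 := by
  have h2 : {z : (Esp d × ℝ) × ℝ | η < ‖z.1.1‖ ^ 2} ∈ 𝓝 ((x, s), t) :=
    (isOpen_lt (by fun_prop) (by fun_prop)).mem_nhds (hf.lt_norm_sq hx)
  have h3 : ((univ : Set (Esp d)) ×ˢ Ioo (-η) 0) ×ˢ Ioo 0 T ∈ 𝓝 ((x, s), t) :=
    ((isOpen_univ.prod isOpen_Ioo).prod isOpen_Ioo).mem_nhds ⟨⟨mem_univ _, hs⟩, ht⟩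
  filter_upwards [h2, h3] with z hz hz'
  exact hf.eq_zero z.1.1 z.1.2 z.2 (Ioo_subset_Icc_self hz'.1.2) (Ioo_subset_Icc_self hz'.2)
    (le_of_lt hz)

theorem cylinder_mem_nhds {x : Esp d} {s t : ℝ} (hx : ‖x‖ < ρ)
    (hs : s ∈ Ioo (-η) 0) (ht : t ∈ Ioo 0 T) :
    (closedBall (0 : Esp d) ρ ×ˢ Icc (-η) 0) ×ˢ Icc 0 T ∈ 𝓝 ((x, s), t) :=
  Filter.mem_of_superset
    (((isOpen_ball.prod isOpen_Ioo).prod isOpen_Ioo).mem_nhds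
      (⟨⟨mem_ball_zero_iff.2 hx, hs⟩, ht⟩ :
        ((x, s), t) ∈ (ball (0 : Esp d) ρ ×ˢ Ioo (-η) 0) ×ˢ Ioo 0 T))
    (prod_mono (prod_mono ball_subset_closedBall Ioo_subset_Icc_self) Ioo_subset_Icc_self)

theorem differentiableAt (hf : SlabSmooth ρ η T f) {x : Esp d} {s t : ℝ}
    (hs : s ∈ Ioo (-η) 0) (ht : t ∈ Ioo 0 T) : DifferentiableAt ℝ f ((x, s), t) := by
  by_cases hx : ‖x‖ < ρ
  · exact (hf.contDiffOn.contDiffAt (cylinder_mem_nhds hx hs ht)).differentiableAt (by simp)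
  · exact (differentiableAt_const (0 : ℝ)).congr_of_eventuallyEq
      (hf.eventuallyEq_zero (not_lt.1 hx) hs ht)

theorem fderiv_eq_zero (hf : SlabSmooth ρ η T f) {x : Esp d} {s t : ℝ} (hx : ρ ≤ ‖x‖)
    (hs : s ∈ Ioo (-η) 0) (ht : t ∈ Ioo 0 T) : fderiv ℝ f ((x, s), t) = 0 := by
  rw [(hf.eventuallyEq_zero hx hs ht).fderiv_eq]
  simp

theorem exists_bound (hf : SlabSmooth ρ η T f) :
    ∃ C : ℝ, 0 ≤ C ∧ ∀ (x : Esp d) (s t : ℝ), s ∈ Ioo (-η) 0 → t ∈ Ioo 0 T →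
      ‖fderiv ℝ f ((x, s), t)‖ ≤ C := by
  obtain ⟨C, hC⟩ := hf.contDiffOn.exists_bound_fderiv_interior
    (((isCompact_closedBall _ _).prod isCompact_Icc).prod isCompact_Icc)
  refine ⟨max C 0, le_max_right _ _, fun x s t hs ht => ?_⟩
  by_cases hx : ‖x‖ < ρ
  · exact (hC _ (mem_interior_iff_mem_nhds.2 (cylinder_mem_nhds hx hs ht))).trans
      (le_max_left _ _)
  · rw [hf.fderiv_eq_zero (not_lt.1 hx) hs ht]
    simp

theorem integrable_fderiv (hf : SlabSmooth ρ η T f) (w : (Esp d × ℝ) × ℝ) :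
    Integrable (fun z => fderiv ℝ f z w) (slabMeasure d η T) := by
  obtain ⟨C, hC0, hC⟩ := hf.exists_bound
  rw [slabMeasure_eq]
  have hm : Measurable (fun z => fderiv ℝ f z w) := measurable_fderiv_apply_const ℝ f w
  have hO : MeasurableSet (((univ : Set (Esp d)) ×ˢ Ioo (-η) 0) ×ˢ Ioo (0 : ℝ) T) :=
    (MeasurableSet.univ.prod measurableSet_Ioo).prod measurableSet_Ioo
  have h1 : IntegrableOn (fun z => fderiv ℝ f z w)
      ((closedBall (0 : Esp d) ρ ×ˢ Ioo (-η) 0) ×ˢ Ioo (0 : ℝ) T) := by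
    refine Measure.integrableOn_of_bounded (M := C * ‖w‖) ?_ hm.aestronglyMeasurable ?_
    · refine ne_of_lt (lt_of_le_of_lt (measure_mono (prod_mono (prod_mono subset_rfl
        Ioo_subset_Icc_self) Ioo_subset_Icc_self)) ?_)
      · exact (((isCompact_closedBall _ _).prod isCompact_Icc).prod
          isCompact_Icc).measure_lt_top
    · refine (ae_restrict_iff' ((measurableSet_closedBall.prod measurableSet_Ioo).prod
        measurableSet_Ioo)).2 (Filter.Eventually.of_forall ?_)
      rintro ⟨⟨x, s⟩, t⟩ ⟨⟨-, hs⟩, ht⟩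
      exact (ContinuousLinearMap.le_opNorm _ _).trans
        (mul_le_mul_of_nonneg_right (hC x s t hs ht) (norm_nonneg _))
  refine h1.of_forall_sdiff_eq_zero hO ?_
  rintro ⟨⟨x, s⟩, t⟩ ⟨⟨⟨-, hs⟩, ht⟩, hn⟩
  have hx : ρ ≤ ‖x‖ := by
    by_contra hx
    exact hn ⟨⟨mem_closedBall_zero_iff.2 (not_le.1 hx).le, hs⟩, ht⟩
  change (fderiv ℝ f ((x, s), t)) w = 0
  rw [hf.fderiv_eq_zero hx hs ht]
  rfl

end SlabSmooth
end Slab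

section SlabIntegrals

variable {d : ℕ} {η T ρ : ℝ} {f : (Esp d × ℝ) × ℝ → ℝ}

namespace SlabSmooth

theorem ae_mem_halfspace (d : ℕ) (η : ℝ) :
    ∀ᵐ p ∂((volume : Measure (Esp d)).prod (volume.restrict (Ioo (-η) 0))),
      p.2 ∈ Ioo (-η) 0 := by
  rw [slab_halfspace_eq]
  filter_upwards [ae_restrict_mem (MeasurableSet.univ.prod measurableSet_Ioo)] with p hp
  exact hp.2

theorem ae_mem_slab (d : ℕ) (η T : ℝ) :
    ∀ᵐ z ∂(slabMeasure d η T), z.1.2 ∈ Ioo (-η) 0 ∧ z.2 ∈ Ioo 0 T := by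
  rw [slabMeasure_eq]
  filter_upwards [ae_restrict_mem
    ((MeasurableSet.univ.prod measurableSet_Ioo).prod measurableSet_Ioo)] with p hp
  exact ⟨hp.1.2, hp.2⟩

theorem integral_fderiv_time (hf : SlabSmooth ρ η T f) (hT : 0 < T)
    (h0 : ∀ x s, s ∈ Ioo (-η) 0 → f ((x, s), T) = 0) :
    ∫ z, fderiv ℝ f z ((0, 0), 1) ∂(slabMeasure d η T) =
      - ∫ p, f (p, 0) ∂((volume : Measure (Esp d)).prod (volume.restrict (Ioo (-η) 0))) := by
  have hi := hf.integrable_fderiv ((0, 0), 1)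
  unfold slabMeasure at hi ⊢
  rw [integral_prod _ hi, ← integral_neg]
  refine integral_congr_ae ?_
  filter_upwards [hi.prod_right_ae, ae_mem_halfspace d η] with p hp hps
  have h1 : ∫ t in (0 : ℝ)..T, fderiv ℝ f (p, t) ((0, 0), 1) = f (p, T) - f (p, 0) := by
    refine intervalIntegral.integral_eq_sub_of_hasDerivAt_of_le (f := fun t => f (p, t)) hT.le
      ?_ ?_ ?_
    · refine hf.continuousOn.comp (by fun_prop) ?_
      intro t ht
      exact ⟨⟨mem_univ _, Ioo_subset_Icc_self hps⟩, ht⟩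
    · intro t ht
      have h2 : HasDerivAt (fun t : ℝ => (p, t)) ((0, 0), 1) t :=
        (hasDerivAt_const t p).prodMk (hasDerivAt_id t)
      exact (hf.differentiableAt (x := p.1) hps ht).hasFDerivAt.comp_hasDerivAt t h2
    · rw [intervalIntegrable_iff_integrableOn_Ioo_of_le hT.le]
      exact hp
  rw [intervalIntegral.integral_of_le hT.le, integral_Ioc_eq_integral_Ioo] at h1
  have h2 : f (p, T) = 0 := h0 p.1 p.2 hps
  change ∫ t in Ioo 0 T, fderiv ℝ f (p, t) ((0, 0), 1) = _
  rw [h1, h2, zero_sub]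

theorem integral_fderiv_vertical (hf : SlabSmooth ρ η T f) (hη : 0 < η)
    (h0 : ∀ x t, t ∈ Ioo 0 T → f ((x, -η), t) = 0) :
    ∫ z, fderiv ℝ f z ((0, 1), 0) ∂(slabMeasure d η T) =
      ∫ t in Ioo 0 T, ∫ x, f ((x, 0), t) := by
  have hi := hf.integrable_fderiv ((0, 1), 0)
  unfold slabMeasure at hi ⊢
  rw [integral_prod_symm _ hi]
  refine integral_congr_ae ?_
  filter_upwards [hi.prod_left_ae, ae_restrict_mem measurableSet_Ioo] with t hti ht
  rw [integral_prod _ hti]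
  refine integral_congr_ae ?_
  filter_upwards [hti.prod_right_ae] with x hx
  have hη' : -η ≤ 0 := by linarith
  have h1 : ∫ s in (-η)..0, fderiv ℝ f ((x, s), t) ((0, 1), 0) =
      f ((x, 0), t) - f ((x, -η), t) := by
    refine intervalIntegral.integral_eq_sub_of_hasDerivAt_of_le
      (f := fun s => f ((x, s), t)) hη' ?_ ?_ ?_
    · refine hf.continuousOn.comp (by fun_prop) ?_
      intro s hs
      exact ⟨⟨mem_univ _, hs⟩, Ioo_subset_Icc_self ht⟩
    · intro s hs
      have h2 : HasDerivAt (fun s : ℝ => ((x, s), t)) ((0, 1), 0) s :=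
        ((hasDerivAt_const s x).prodMk (hasDerivAt_id s)).prodMk (hasDerivAt_const s t)
      exact (hf.differentiableAt (x := x) hs ht).hasFDerivAt.comp_hasDerivAt s h2
    · rw [intervalIntegrable_iff_integrableOn_Ioo_of_le hη']
      exact hx
  rw [intervalIntegral.integral_of_le hη', integral_Ioc_eq_integral_Ioo] at h1
  change ∫ s in Ioo (-η) 0, fderiv ℝ f ((x, s), t) ((0, 1), 0) = _
  rw [h1, h0 x t ht, sub_zero]

theorem integral_fderiv_horizontal (hf : SlabSmooth ρ η T f) (e : Esp d) :
    ∫ z, fderiv ℝ f z ((e, 0), 0) ∂(slabMeasure d η T) = 0 := by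
  have hi := hf.integrable_fderiv ((e, 0), 0)
  unfold slabMeasure at hi ⊢
  rw [integral_prod_symm _ hi]
  refine integral_eq_zero_of_ae ?_
  filter_upwards [hi.prod_left_ae, ae_restrict_mem measurableSet_Ioo] with t hti ht
  rw [integral_prod_symm _ hti]
  refine integral_eq_zero_of_ae ?_
  filter_upwards [hti.prod_left_ae, ae_restrict_mem measurableSet_Ioo] with s hsi hs
  have hd : ∀ x : Esp d, HasFDerivAt (fun x => f ((x, s), t))
      ((fderiv ℝ f ((x, s), t)).comp
        (((ContinuousLinearMap.id ℝ (Esp d)).prod (0 : Esp d →L[ℝ] ℝ)).prod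
          (0 : Esp d →L[ℝ] ℝ))) x := by
    intro x
    have h2 : HasFDerivAt (fun x : Esp d => ((x, s), t))
        (((ContinuousLinearMap.id ℝ (Esp d)).prod (0 : Esp d →L[ℝ] ℝ)).prod
          (0 : Esp d →L[ℝ] ℝ)) x :=
      ((hasFDerivAt_id x).prodMk (hasFDerivAt_const s x)).prodMk (hasFDerivAt_const t x)
    exact (hf.differentiableAt (x := x) hs ht).hasFDerivAt.comp x h2
  have hfd : ∀ x : Esp d, fderiv ℝ (fun x => f ((x, s), t)) x e =
      fderiv ℝ f ((x, s), t) ((e, 0), 0) := by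
    intro x
    rw [(hd x).fderiv]
    rfl
  have hcont : Continuous (fun x : Esp d => f ((x, s), t)) :=
    continuous_iff_continuousAt.2 fun x => (hd x).continuousAt
  have hsupp : HasCompactSupport (fun x : Esp d => f ((x, s), t)) := by
    refine HasCompactSupport.intro (isCompact_closedBall (0 : Esp d) ρ) ?_
    intro x hx
    rw [mem_closedBall_zero_iff, not_le] at hx
    exact hf.eq_zero x s t (Ioo_subset_Icc_self hs) (Ioo_subset_Icc_self ht)
      (hf.lt_norm_sq hx.le).le
  have key := integral_mul_fderiv_eq_neg_fderiv_mul_of_integrable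
    (μ := (volume : Measure (Esp d))) (f := fun _ : Esp d => (1 : ℝ))
    (g := fun x : Esp d => f ((x, s), t)) (v := e)
    (by simp) (by simpa only [one_mul, hfd] using hsi)
    (by simpa only [one_mul] using hcont.integrable_of_hasCompactSupport hsupp)
    (fun x _ => differentiableAt_const _) (fun x _ => (hd x).differentiableAt)
  simpa only [one_mul, hfd, fderiv_fun_const, Pi.zero_apply, zero_apply,
    zero_mul, integral_zero, neg_zero] using key

end SlabSmooth
end SlabIntegrals

section Weight

theorem hasDerivAt_max_zero_pow (k : ℕ) (r : ℝ) :
    HasDerivAt (fun r : ℝ => max r 0 ^ (k + 2)) ((k + 2) * max r 0 ^ (k + 1)) r := by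
  rcases lt_trichotomy r 0 with hr | hr | hr
  · have h1 : (fun r : ℝ => max r 0 ^ (k + 2)) =ᶠ[𝓝 r] fun _ => 0 := by
      filter_upwards [gt_mem_nhds hr] with y hy
      simp [max_eq_right hy.le]
    have h2 := (hasDerivAt_const r (0 : ℝ)).congr_of_eventuallyEq h1
    simpa [max_eq_right hr.le] using h2
  · subst hr
    have h1 : HasDerivAt (fun r : ℝ => max r 0 ^ (k + 2)) 0 0 := by
      rw [hasDerivAt_iff_isLittleO]
      have h2 : (fun r : ℝ => max r 0 ^ (k + 2)) =O[𝓝 0] fun r : ℝ => r ^ (k + 2) := by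
        refine Asymptotics.IsBigO.of_bound 1 (Filter.Eventually.of_forall fun r => ?_)
        rw [one_mul, norm_pow, norm_pow]
        refine pow_le_pow_left₀ (norm_nonneg _) ?_ _
        rw [Real.norm_eq_abs, Real.norm_eq_abs, abs_of_nonneg (le_max_right _ _)]
        exact max_le (le_abs_self r) (abs_nonneg r)
      have h3 : (fun r : ℝ => r ^ (k + 2)) =o[𝓝 0] fun r : ℝ => r := by
        simpa using Asymptotics.isLittleO_pow_id (𝕜 := ℝ) (n := k + 2) (by omega)
      simpa using h2.trans_isLittleO h3
    simpa using h1
  · have h1 : (fun r : ℝ => max r 0 ^ (k + 2)) =ᶠ[𝓝 r] fun r => r ^ (k + 2) := by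
      filter_upwards [lt_mem_nhds hr] with y hy
      simp [max_eq_left hy.le]
    have h2 := (hasDerivAt_pow (k + 2) r).congr_of_eventuallyEq h1
    simpa [max_eq_left hr.le] using h2

theorem contDiff_max_zero_pow (k : ℕ) : ContDiff ℝ 1 (fun r : ℝ => max r 0 ^ (k + 2)) := by
  rw [contDiff_one_iff_deriv]
  refine ⟨fun r => (hasDerivAt_max_zero_pow k r).differentiableAt, ?_⟩
  have h : deriv (fun r : ℝ => max r 0 ^ (k + 2)) =
      fun r : ℝ => ((k : ℝ) + 2) * max r 0 ^ (k + 1) :=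
    funext fun r => (hasDerivAt_max_zero_pow k r).deriv
  rw [h]
  fun_prop

variable {d : ℕ}

/-- The phase `η (1 - t/T) + s - |x|²`. -/
def slabPhase (η T : ℝ) (z : (Esp d × ℝ) × ℝ) : ℝ :=
  η * (1 - z.2 / T) + z.1.2 - ‖z.1.1‖ ^ 2

/-- The weight obtained by truncating a power of the phase at zero. -/
def slabWeight (η T : ℝ) (k : ℕ) (z : (Esp d × ℝ) × ℝ) : ℝ :=
  max (slabPhase η T z) 0 ^ (k + 2)

theorem contDiff_slabPhase (η T : ℝ) : ContDiff ℝ 1 (slabPhase (d := d) η T) := by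
  unfold slabPhase
  have h : ContDiff ℝ 1 (fun z : (Esp d × ℝ) × ℝ => ‖z.1.1‖ ^ 2) :=
    (contDiff_fst.comp contDiff_fst).norm_sq ℝ
  fun_prop

theorem contDiff_slabWeight (η T : ℝ) (k : ℕ) : ContDiff ℝ 1 (slabWeight (d := d) η T k) :=
  (contDiff_max_zero_pow k).comp (contDiff_slabPhase η T)

theorem slabWeight_nonneg (η T : ℝ) (k : ℕ) (z : (Esp d × ℝ) × ℝ) : 0 ≤ slabWeight η T k z :=
  pow_nonneg (le_max_right _ _) _

theorem slabWeight_eq_zero {η T : ℝ} (k : ℕ) {z : (Esp d × ℝ) × ℝ} (h : slabPhase η T z ≤ 0) :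
    slabWeight η T k z = 0 := by
  simp [slabWeight, max_eq_right h]

theorem fderiv_slabPhase (η T : ℝ) (x : Esp d) (s t : ℝ) (a : Esp d) (b c : ℝ) :
    fderiv ℝ (slabPhase η T) ((x, s), t) ((a, b), c) = b - 2 * ⟪x, a⟫ - η / T * c := by
  have h0 : HasFDerivAt (fun z : (Esp d × ℝ) × ℝ => z.1.1)
      ((ContinuousLinearMap.fst ℝ (Esp d) ℝ).comp (ContinuousLinearMap.fst ℝ (Esp d × ℝ) ℝ))
      ((x, s), t) :=
    ((ContinuousLinearMap.fst ℝ (Esp d) ℝ).comp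
      (ContinuousLinearMap.fst ℝ (Esp d × ℝ) ℝ)).hasFDerivAt
  have h1 := h0.norm_sq
  have h2 : HasFDerivAt (fun z : (Esp d × ℝ) × ℝ => z.1.2)
      ((ContinuousLinearMap.snd ℝ (Esp d) ℝ).comp (ContinuousLinearMap.fst ℝ (Esp d × ℝ) ℝ))
      ((x, s), t) :=
    ((ContinuousLinearMap.snd ℝ (Esp d) ℝ).comp
      (ContinuousLinearMap.fst ℝ (Esp d × ℝ) ℝ)).hasFDerivAt
  have h3 : HasFDerivAt (fun z : (Esp d × ℝ) × ℝ => η * (1 - z.2 / T)) _ ((x, s), t) :=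
    (((hasFDerivAt_snd (𝕜 := ℝ)).mul_const T⁻¹).const_sub 1).const_mul η
  have h4 : HasFDerivAt (slabPhase η T) _ ((x, s), t) := (h3.add h2).sub h1
  rw [h4.fderiv]
  simp
  ring

theorem fderiv_slabWeight (η T : ℝ) (k : ℕ) (z w : (Esp d × ℝ) × ℝ) :
    fderiv ℝ (slabWeight η T k) z w =
      (k + 2) * max (slabPhase η T z) 0 ^ (k + 1) * fderiv ℝ (slabPhase η T) z w := by
  have h1 : HasFDerivAt (slabPhase η T) (fderiv ℝ (slabPhase η T) z) z :=
    ((contDiff_slabPhase η T).differentiable (by simp) z).hasFDerivAt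
  have h2 : HasFDerivAt (slabWeight η T k) _ z :=
    (hasDerivAt_max_zero_pow k (slabPhase η T z)).comp_hasFDerivAt z h1
  rw [h2.fderiv]
  simp

theorem slabPhase_antitone {η T : ℝ} (hη : 0 ≤ η) (hT : 0 < T) (p : Esp d × ℝ) {t : ℝ}
    (ht : 0 ≤ t) : slabPhase η T (p, t) ≤ slabPhase η T (p, 0) := by
  simp only [slabPhase, zero_div, sub_zero, mul_one]
  have h1 : 0 ≤ η * (t / T) := by positivity
  nlinarith

theorem slabWeight_antitone {η T : ℝ} (hη : 0 ≤ η) (hT : 0 < T) (k : ℕ) (p : Esp d × ℝ) {t : ℝ}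
    (ht : 0 ≤ t) : slabWeight η T k (p, t) ≤ slabWeight η T k (p, 0) :=
  pow_le_pow_left₀ (le_max_right _ _)
    (max_le_max_right 0 (slabPhase_antitone hη hT p ht)) _

theorem slabPhase_le {η T : ℝ} (hη : 0 ≤ η) (hT : 0 < T) {x : Esp d} {s t : ℝ}
    (hs : s ≤ 0) (ht : 0 ≤ t) : slabPhase η T ((x, s), t) ≤ η - ‖x‖ ^ 2 := by
  refine (slabPhase_antitone hη hT (x, s) ht).trans ?_
  simp only [slabPhase, zero_div, sub_zero, mul_one]
  linarith

end Weight

section Energy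

variable {d : ℕ}

/-- The algebraic core of the weighted energy estimate. -/
theorem weighted_energy_pointwise {V Dv w w' δ div Cp Kd γ lam F g μ : ℝ} (hw : 0 ≤ w)
    (hV : |Dv| ≤ Cp * |V| + F * g) (hδ : γ ≤ δ) (hγ : 0 ≤ γ) (hμ : 0 ≤ μ) (hw' : μ * w ≤ w')
    (hdiv : |div| ≤ Kd) (hlam : 0 < lam) (hlam' : lam ≤ μ * γ - 2 * Cp - Kd) :
    -(lam⁻¹ * (F ^ 2 * w * g ^ 2)) ≤ 2 * V * Dv * w + V ^ 2 * (w' * δ) + V ^ 2 * w * div := by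
  have h1 : -(|V| * (Cp * |V| + F * g)) ≤ V * Dv := by
    have := neg_abs_le (V * Dv)
    rw [abs_mul] at this
    nlinarith [mul_le_mul_of_nonneg_left hV (abs_nonneg V)]
  have h2 : μ * w * γ ≤ w' * δ :=
    mul_le_mul hw' hδ hγ (le_trans (mul_nonneg hμ hw) hw')
  have h3 : -Kd ≤ div := (abs_le.1 hdiv).1
  have h4 : V ^ 2 * (μ * w * γ) ≤ V ^ 2 * (w' * δ) :=
    mul_le_mul_of_nonneg_left h2 (sq_nonneg V)
  have h5 : V ^ 2 * w * (-Kd) ≤ V ^ 2 * w * div :=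
    mul_le_mul_of_nonneg_left h3 (mul_nonneg (sq_nonneg V) hw)
  have h6 : 2 * w * (-(|V| * (Cp * |V| + F * g))) ≤ 2 * w * (V * Dv) :=
    mul_le_mul_of_nonneg_left h1 (by linarith)
  have h7 : V ^ 2 * w * lam ≤ V ^ 2 * w * (μ * γ - 2 * Cp - Kd) :=
    mul_le_mul_of_nonneg_left hlam' (mul_nonneg (sq_nonneg V) hw)
  have h8 : 0 ≤ w * (lam * |V| ^ 2 - 2 * |V| * (F * g) + lam⁻¹ * (F * g) ^ 2) := by
    have : lam * |V| ^ 2 - 2 * |V| * (F * g) + lam⁻¹ * (F * g) ^ 2 =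
        lam * (|V| - lam⁻¹ * (F * g)) ^ 2 := by
      field_simp
      ring
    rw [this]
    positivity
  have h9 : |V| ^ 2 = V ^ 2 := sq_abs V
  have h10 : 2 * w * (-(|V| * (Cp * |V| + F * g))) =
    -2 * w * Cp * V ^ 2 - 2 * w * |V| * (F * g) := by rw [← h9]; ring
  rw [h9] at h8
  rw [h10] at h6
  nlinarith

variable {η T ρ : ℝ}

theorem integrable_mul_slabWeight_zero (hη : 0 < η) (hT : 0 < T) (hρ : 0 < ρ) (hηρ : η < ρ ^ 2)
    (k : ℕ) {F : Esp d × ℝ → ℝ} (hF : ContinuousOn F (closedBall 0 ρ ×ˢ Icc (-η) 0)) :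
    Integrable (fun p => F p * slabWeight η T k (p, 0))
      ((volume : Measure (Esp d)).prod (volume.restrict (Ioo (-η) 0))) := by
  rw [slab_halfspace_eq]
  have h1 : IntegrableOn (fun p => F p * slabWeight η T k (p, 0))
      (closedBall (0 : Esp d) ρ ×ˢ Icc (-η) 0) := by
    refine ContinuousOn.integrableOn_compact ((isCompact_closedBall _ _).prod isCompact_Icc) ?_
    refine hF.mul (Continuous.continuousOn ?_)
    exact (contDiff_slabWeight η T k).continuous.comp (by fun_prop)
  refine (h1.mono_set (prod_mono subset_rfl Ioo_subset_Icc_self)).of_forall_sdiff_eq_zero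
    (MeasurableSet.univ.prod measurableSet_Ioo) ?_
  rintro ⟨x, s⟩ ⟨⟨-, hs⟩, hn⟩
  have hx : ρ ≤ ‖x‖ := by
    by_contra hx
    exact hn ⟨mem_closedBall_zero_iff.2 (not_le.1 hx).le, hs⟩
  have h2 := slabPhase_le hη.le hT (x := x) hs.2.le le_rfl
  have h3 : ρ ^ 2 ≤ ‖x‖ ^ 2 := pow_le_pow_left₀ hρ.le hx 2
  change F (x, s) * slabWeight η T k ((x, s), 0) = 0
  rw [slabWeight_eq_zero k (by linarith), mul_zero]

/-- Weighted energy estimate for a transport inequality in a slab whose lower and terminal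
boundaries are hidden by the weight. -/
theorem weighted_energy_estimate {γ Cp Kd lam : ℝ} (hη : 0 < η) (hT : 0 < T) (hρ : 0 < ρ)
    (hηρ : η < ρ ^ 2) (k : ℕ) {v : (Esp d × ℝ) × ℝ → ℝ} {A : Esp d × ℝ → Esp d}
    {B : Esp d × ℝ → ℝ} {F : Esp d × ℝ → ℝ} {g : ℝ → ℝ}
    (hv : ContDiffOn ℝ 1 v ((closedBall 0 ρ ×ˢ Icc (-η) 0) ×ˢ Icc 0 T))
    (hA : ContDiffOn ℝ 1 A (closedBall 0 ρ ×ˢ Icc (-η) 0))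
    (hB : ContDiffOn ℝ 1 B (closedBall 0 ρ ×ˢ Icc (-η) 0))
    (hF : ContinuousOn F (closedBall 0 ρ ×ˢ Icc (-η) 0))
    (hg : IntegrableOn (fun t => g t ^ 2) (Ioo 0 T))
    (hdiv : ∀ x s, ‖x‖ < ρ → s ∈ Ioo (-η) 0 →
      |∑ i, fderiv ℝ (fun p => A p i) (x, s) (EuclideanSpace.single i 1, 0)
        + fderiv ℝ B (x, s) (0, 1)| ≤ Kd)
    (hγ0 : 0 ≤ γ)
    (hγ : ∀ x s, ‖x‖ < ρ → s ∈ Ioo (-η) 0 → γ ≤ B (x, s) - 2 * ⟪x, A (x, s)⟫ - η / T)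
    (hpde : ∀ x s t, ‖x‖ < ρ → s ∈ Ioo (-η) 0 → t ∈ Ioo 0 T →
      |fderiv ℝ v ((x, s), t) ((A (x, s), B (x, s)), 1)| ≤
        Cp * |v ((x, s), t)| + F (x, s) * g t)
    (hlam : 0 < lam) (hlam' : lam ≤ (k + 2) / η * γ - 2 * Cp - Kd) :
    ∫ p, v (p, 0) ^ 2 * slabWeight η T k (p, 0)
        ∂((volume : Measure (Esp d)).prod (volume.restrict (Ioo (-η) 0))) ≤
      (∫ t in Ioo 0 T, ∫ x, v ((x, 0), t) ^ 2 * slabWeight η T k ((x, 0), t) * B (x, 0)) +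
      lam⁻¹ * ((∫ p, F p ^ 2 * slabWeight η T k (p, 0)
        ∂((volume : Measure (Esp d)).prod (volume.restrict (Ioo (-η) 0)))) *
        ∫ t in Ioo 0 T, g t ^ 2) := by
  set q : (Esp d × ℝ) × ℝ → ℝ := fun z => v z ^ 2 * slabWeight η T k z with hq
  have hphase : ∀ x s t, s ≤ 0 → 0 ≤ t → η ≤ ‖x‖ ^ 2 → q ((x, s), t) = 0 := by
    intro x s t hs ht hx
    have := slabPhase_le hη.le hT (x := x) hs ht
    simp only [hq]
    rw [slabWeight_eq_zero k (by linarith), mul_zero]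
  have hfst : MapsTo Prod.fst ((closedBall (0 : Esp d) ρ ×ˢ Icc (-η) 0) ×ˢ Icc 0 T)
      (closedBall 0 ρ ×ˢ Icc (-η) 0) := fun z hz => hz.1
  have hqc : ContDiffOn ℝ 1 q ((closedBall 0 ρ ×ˢ Icc (-η) 0) ×ˢ Icc 0 T) :=
    (hv.pow 2).mul (contDiff_slabWeight η T k).contDiffOn
  have hAi : ∀ i, ContDiffOn ℝ 1 (fun p => A p i) (closedBall 0 ρ ×ˢ Icc (-η) 0) := fun i =>
    (EuclideanSpace.proj i : Esp d →L[ℝ] ℝ).contDiff.comp_contDiffOn hA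
  have hqs : SlabSmooth ρ η T q :=
    ⟨hqc, hρ, hηρ, fun x s t hs ht hx => hphase x s t hs.2 ht.1 hx⟩
  have hqB : SlabSmooth ρ η T (fun z => q z * B z.1) :=
    ⟨hqc.mul (hB.comp contDiff_fst.contDiffOn hfst), hρ, hηρ, fun x s t hs ht hx => by
      rw [hphase x s t hs.2 ht.1 hx, zero_mul]⟩
  have hqA : ∀ i, SlabSmooth ρ η T (fun z => q z * A z.1 i) := fun i =>
    ⟨hqc.mul ((hAi i).comp contDiff_fst.contDiffOn hfst), hρ, hηρ, fun x s t hs ht hx => by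
      rw [hphase x s t hs.2 ht.1 hx, zero_mul]⟩
  have it := hqs.integral_fderiv_time hT (by
    intro x s hs
    simp only [hq]
    rw [slabWeight_eq_zero k, mul_zero]
    simp only [slabPhase, div_self hT.ne']
    nlinarith [hs.2, sq_nonneg ‖x‖])
  have is := hqB.integral_fderiv_vertical hη (by
    intro x t ht
    simp only [hq]
    rw [slabWeight_eq_zero k, mul_zero, zero_mul]
    have h1 := slabPhase_antitone hη.le hT (x, -η) ht.1.le
    refine h1.trans ?_
    simp only [slabPhase]
    nlinarith [sq_nonneg ‖x‖, zero_div T])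
  have ix := fun i => (hqA i).integral_fderiv_horizontal (EuclideanSpace.single i 1)
  have jt := hqs.integrable_fderiv ((0, 0), 1)
  have js := hqB.integrable_fderiv ((0, 1), 0)
  have jx := fun i => (hqA i).integrable_fderiv ((EuclideanSpace.single i 1, 0), 0)
  have jsum := integrable_finsetSum Finset.univ (fun i _ => jx i)
  have jxs : Integrable (fun z =>
      ∑ i, fderiv ℝ (fun z => q z * A z.1 i) z ((EuclideanSpace.single i 1, 0), 0)
      + fderiv ℝ (fun z => q z * B z.1) z ((0, 1), 0)) (slabMeasure d η T) := jsum.add js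
  have htotal : ∫ z, (∑ i, fderiv ℝ (fun z => q z * A z.1 i) z ((EuclideanSpace.single i 1, 0), 0)
      + fderiv ℝ (fun z => q z * B z.1) z ((0, 1), 0) + fderiv ℝ q z ((0, 0), 1))
        ∂(slabMeasure d η T) = (∫ t in Ioo 0 T, ∫ x, q ((x, 0), t) * B (x, 0)) -
      ∫ p, q (p, 0) ∂((volume : Measure (Esp d)).prod (volume.restrict (Ioo (-η) 0))) := by
    rw [integral_add jxs jt, integral_add jsum js,
      integral_finsetSum _ (fun i _ => jx i), it, is, Finset.sum_congr rfl (fun i _ => ix i)]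
    simp only [Finset.sum_const_zero, zero_add]
    ring
  have hFW := integrable_mul_slabWeight_zero hη hT hρ hηρ k (hF.pow 2)
  have hsource : Integrable (fun z : (Esp d × ℝ) × ℝ =>
      (F z.1 ^ 2 * slabWeight η T k (z.1, 0)) * g z.2 ^ 2) (slabMeasure d η T) :=
    hFW.mul_prod hg
  have hlower : ∫ z, -(lam⁻¹ * ((F z.1 ^ 2 * slabWeight η T k (z.1, 0)) * g z.2 ^ 2))
        ∂(slabMeasure d η T) ≤
      ∫ z, (∑ i, fderiv ℝ (fun z => q z * A z.1 i) z ((EuclideanSpace.single i 1, 0), 0)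
      + fderiv ℝ (fun z => q z * B z.1) z ((0, 1), 0) + fderiv ℝ q z ((0, 0), 1))
        ∂(slabMeasure d η T) := by
    refine integral_mono_ae (hsource.const_mul _).neg (jxs.add jt) ?_
    filter_upwards [SlabSmooth.ae_mem_slab d η T] with z hz
    obtain ⟨⟨x, s⟩, t⟩ := z
    obtain ⟨hs, ht⟩ := hz
    simp only at hs ht ⊢
    have hW0 := slabWeight_nonneg η T k ((x, s), 0)
    have hlam0 := inv_pos.2 hlam
    by_cases hx : ‖x‖ < ρ
    · have hK := SlabSmooth.cylinder_mem_nhds hx hs ht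
      have hK' : closedBall (0 : Esp d) ρ ×ˢ Icc (-η) 0 ∈ 𝓝 (x, s) :=
        prod_mem_nhds (Filter.mem_of_superset (isOpen_ball.mem_nhds (mem_ball_zero_iff.2 hx))
          ball_subset_closedBall) (Icc_mem_nhds hs.1 hs.2)
      have dv := ((hv.contDiffAt hK).differentiableAt (by simp)).hasFDerivAt
      have dW := ((contDiff_slabWeight (d := d) η T k).differentiable (by simp)
        ((x, s), t)).hasFDerivAt
      have dq' : HasFDerivAt q _ ((x, s), t) := (dv.pow 2).mul dW
      have dq : ∀ w, fderiv ℝ q ((x, s), t) w =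
          2 * v ((x, s), t) * slabWeight η T k ((x, s), t) * fderiv ℝ v ((x, s), t) w
          + v ((x, s), t) ^ 2 * fderiv ℝ (slabWeight η T k) ((x, s), t) w := by
        intro w
        rw [dq'.fderiv]
        simp
        ring
      have dcomp : ∀ {b : Esp d × ℝ → ℝ}, DifferentiableAt ℝ b (x, s) → ∀ w,
          fderiv ℝ (fun z : (Esp d × ℝ) × ℝ => q z * b z.1) ((x, s), t) w =
          q ((x, s), t) * fderiv ℝ b (x, s) w.1 + b (x, s) * fderiv ℝ q ((x, s), t) w := by
        intro b hb w
        have h1 : HasFDerivAt (fun z : (Esp d × ℝ) × ℝ => b z.1) _ ((x, s), t) :=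
          hb.hasFDerivAt.comp ((x, s), t) hasFDerivAt_fst
        have h2 : HasFDerivAt (fun z : (Esp d × ℝ) × ℝ => q z * b z.1) _ ((x, s), t) :=
          dq'.differentiableAt.hasFDerivAt.mul h1
        rw [h2.fderiv]
        simp
      have dB := (hB.contDiffAt hK').differentiableAt (by simp)
      have dA := fun i => ((hAi i).contDiffAt hK').differentiableAt (by simp)
      have hvec : ((A (x, s), B (x, s)), (1 : ℝ)) =
          ∑ i, A (x, s) i • (((EuclideanSpace.single i (1 : ℝ) : Esp d), (0 : ℝ)), (0 : ℝ))
            + B (x, s) • ((0, 1), 0) + ((0, 0), 1) := by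
        have hsum : ∑ i, A (x, s) i • (EuclideanSpace.single i (1 : ℝ) : Esp d) = A (x, s) := by
          ext j
          simp [Pi.single_apply]
        refine Prod.ext (Prod.ext ?_ ?_) ?_
        · simp [Prod.fst_sum, hsum]
        · simp [Prod.fst_sum, Prod.snd_sum]
        · simp [Prod.snd_sum]
      have htot : ∑ i, fderiv ℝ (fun z => q z * A z.1 i) ((x, s), t)
            ((EuclideanSpace.single i 1, 0), 0)
          + fderiv ℝ (fun z => q z * B z.1) ((x, s), t) ((0, 1), 0)
          + fderiv ℝ q ((x, s), t) ((0, 0), 1) =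
          fderiv ℝ q ((x, s), t) ((A (x, s), B (x, s)), 1) + q ((x, s), t) *
          (∑ i, fderiv ℝ (fun p => A p i) (x, s) (EuclideanSpace.single i 1, 0)
            + fderiv ℝ B (x, s) (0, 1)) := by
        rw [hvec, map_add, map_add, map_sum, dcomp dB,
          Finset.sum_congr rfl (fun i _ => dcomp (dA i) _), Finset.sum_add_distrib,
          ← Finset.mul_sum]
        simp only [map_smul, smul_eq_mul]
        ring
      rw [htot, dq, fderiv_slabWeight, fderiv_slabPhase]
      have hWle := slabWeight_antitone hη.le hT k (x, s) ht.1.le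
      set ω := max (slabPhase η T ((x, s), t)) 0 with hω
      have hω0 : 0 ≤ ω := le_max_right _ _
      have hωη : ω ≤ η := by
        refine max_le ((slabPhase_le hη.le hT hs.2.le ht.1.le).trans ?_) hη.le
        nlinarith [sq_nonneg ‖x‖]
      have hWω : slabWeight η T k ((x, s), t) = ω ^ (k + 2) := rfl
      have key := weighted_energy_pointwise (V := v ((x, s), t)) (w := ω ^ (k + 2))
        (w' := (k + 2) * ω ^ (k + 1)) (μ := (k + 2) / η) (pow_nonneg hω0 _)
        (hpde x s t hx hs ht) (hγ x s hx hs) hγ0 (by positivity) (by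
          rw [div_mul_eq_mul_div, div_le_iff₀ hη, pow_succ ω (k + 1)]
          nlinarith [mul_nonneg (mul_nonneg (by positivity : (0 : ℝ) ≤ k + 2)
            (pow_nonneg hω0 (k + 1))) (sub_nonneg.2 hωη)])
        (hdiv x s hx hs) hlam hlam'
      have h1 : lam⁻¹ * (F (x, s) ^ 2 * ω ^ (k + 2) * g t ^ 2) ≤
          lam⁻¹ * (F (x, s) ^ 2 * slabWeight η T k ((x, s), 0) * g t ^ 2) := by
        rw [← hWω]
        gcongr
      have hqe : q ((x, s), t) = v ((x, s), t) ^ 2 * ω ^ (k + 2) := rfl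
      rw [hqe, hWω]
      refine (neg_le_neg h1).trans (key.trans (le_of_eq ?_))
      ring
    · have hx' := not_lt.1 hx
      rw [Finset.sum_eq_zero (fun i _ => by rw [(hqA i).fderiv_eq_zero hx' hs ht]; rfl),
        hqB.fderiv_eq_zero hx' hs ht, hqs.fderiv_eq_zero hx' hs ht]
      simp only [zero_apply, add_zero]
      have : 0 ≤ lam⁻¹ * (F (x, s) ^ 2 * slabWeight η T k ((x, s), 0) * g t ^ 2) := by positivity
      linarith
  have hprod : ∫ z, -(lam⁻¹ * ((F z.1 ^ 2 * slabWeight η T k (z.1, 0)) * g z.2 ^ 2))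
        ∂(slabMeasure d η T) = -(lam⁻¹ * ((∫ p, F p ^ 2 * slabWeight η T k (p, 0)
        ∂((volume : Measure (Esp d)).prod (volume.restrict (Ioo (-η) 0)))) *
        ∫ t in Ioo 0 T, g t ^ 2)) := by
    rw [integral_neg, integral_const_mul]
    congr 2
    exact integral_prod_mul (fun p => F p ^ 2 * slabWeight η T k (p, 0)) (fun t => g t ^ 2)
  rw [hprod, htotal] at hlower
  linarith

end Energy

section Graph

variable {d : ℕ}

@[simp] theorem graphMk_castSucc (x : Esp d) (s : ℝ) (i : Fin d) :
    graphMk d x s i.castSucc = x i := by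
  simp [graphMk]

@[simp] theorem graphMk_last (x : Esp d) (s : ℝ) : graphMk d x s (Fin.last d) = s := by
  simp [graphMk]

/-- `graphMk` as a continuous linear equivalence `ℝ^d × ℝ ≃ ℝ^{d+1}`. -/
def graphEquiv (d : ℕ) : (Esp d × ℝ) ≃L[ℝ] Esp (d + 1) :=
  LinearEquiv.toContinuousLinearEquiv
    { toFun := fun p => graphMk d p.1 p.2
      invFun := fun y => (WithLp.toLp 2 fun i => y i.castSucc, y (Fin.last d))
      map_add' := fun p q => by
        ext i
        refine Fin.lastCases ?_ (fun j => ?_) i <;> simp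
      map_smul' := fun a p => by
        ext i
        refine Fin.lastCases ?_ (fun j => ?_) i <;> simp
      left_inv := fun p => by
        refine Prod.ext ?_ ?_
        · ext i; simp
        · simp
      right_inv := fun y => by
        ext i
        refine Fin.lastCases ?_ (fun j => ?_) i <;> simp }

theorem graphEquiv_apply (p : Esp d × ℝ) : graphEquiv d p = graphMk d p.1 p.2 := rfl

theorem inner_graphMk (x y : Esp d) (s r : ℝ) :
    ⟪graphMk d x s, graphMk d y r⟫ = ⟪x, y⟫ + s * r := by
  simp only [PiLp.inner_apply, Fin.sum_univ_castSucc, graphMk_castSucc, graphMk_last]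
  simp [mul_comm]

theorem norm_graphMk_sq (x : Esp d) (s : ℝ) : ‖graphMk d x s‖ ^ 2 = ‖x‖ ^ 2 + s ^ 2 := by
  rw [← real_inner_self_eq_norm_sq, inner_graphMk, real_inner_self_eq_norm_sq, sq s]

theorem norm_le_norm_graphMk (x : Esp d) (s : ℝ) : ‖x‖ ≤ ‖graphMk d x s‖ := by
  refine abs_le_of_sq_le_sq' ?_ (norm_nonneg _) |>.2
  rw [norm_graphMk_sq]
  nlinarith

theorem abs_le_norm_graphMk (x : Esp d) (s : ℝ) : |s| ≤ ‖graphMk d x s‖ := by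
  refine abs_le_of_sq_le_sq ?_ (norm_nonneg _)
  rw [norm_graphMk_sq]
  nlinarith [sq_nonneg ‖x‖]

theorem norm_symm_fst_le (y : Esp (d + 1)) : ‖((graphEquiv d).symm y).1‖ ≤ ‖y‖ := by
  have h : graphMk d ((graphEquiv d).symm y).1 ((graphEquiv d).symm y).2 = y :=
    (graphEquiv d).apply_symm_apply y
  calc _ ≤ _ := norm_le_norm_graphMk _ ((graphEquiv d).symm y).2
    _ = _ := by rw [h]

theorem abs_symm_snd_le (y : Esp (d + 1)) : |((graphEquiv d).symm y).2| ≤ ‖y‖ := by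
  have h : graphMk d ((graphEquiv d).symm y).1 ((graphEquiv d).symm y).2 = y :=
    (graphEquiv d).apply_symm_apply y
  calc _ ≤ _ := abs_le_norm_graphMk ((graphEquiv d).symm y).1 _
    _ = _ := by rw [h]

theorem measurePreserving_graphEquiv (d : ℕ) : MeasurePreserving (graphEquiv d) := by
  let e : WithLp 2 (Esp d × ℝ) ≃ₗᵢ[ℝ] Esp (d + 1) :=
    { toLinearEquiv := (WithLp.linearEquiv 2 ℝ (Esp d × ℝ)).trans (graphEquiv d).toLinearEquiv
      norm_map' := fun z => by
        refine (sq_eq_sq₀ (norm_nonneg _) (norm_nonneg _)).1 ?_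
        rw [WithLp.prod_norm_sq_eq_of_L2]
        exact (norm_graphMk_sq _ _).trans (by simp) }
  exact e.measurePreserving.comp (WithLp.volume_preserving_toLp (Esp d) ℝ)

/-- Graph coordinates `(x, s) ↦ (x, ℓ(x) + s)`. -/
def graphFlat (ℓ : Esp d → ℝ) (p : Esp d × ℝ) : Esp (d + 1) := graphMk d p.1 (ℓ p.1 + p.2)

theorem graphFlat_eq (ℓ : Esp d → ℝ) (p : Esp d × ℝ) :
    graphFlat ℓ p = graphEquiv d (p.1, ℓ p.1 + p.2) := rfl

theorem hasFDerivAt_graphFlat {ℓ : Esp d → ℝ} {p : Esp d × ℝ} (h : DifferentiableAt ℝ ℓ p.1) :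
    HasFDerivAt (graphFlat ℓ) ((graphEquiv d : (Esp d × ℝ) →L[ℝ] Esp (d + 1)).comp
      ((ContinuousLinearMap.fst ℝ (Esp d) ℝ).prod
        ((fderiv ℝ ℓ p.1).comp (ContinuousLinearMap.fst ℝ (Esp d) ℝ)
          + ContinuousLinearMap.snd ℝ (Esp d) ℝ))) p := by
  have h1 : HasFDerivAt (fun p : Esp d × ℝ => ℓ p.1) _ p :=
    h.hasFDerivAt.comp p hasFDerivAt_fst
  exact (graphEquiv d : (Esp d × ℝ) →L[ℝ] Esp (d + 1)).hasFDerivAt.comp p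
    (hasFDerivAt_fst.prodMk (h1.add hasFDerivAt_snd))

theorem contDiffOn_graphFlat {ℓ : Esp d → ℝ} {S : Set (Esp d)} {n : WithTop ℕ∞}
    (h : ContDiffOn ℝ n ℓ S) (I : Set ℝ) : ContDiffOn ℝ n (graphFlat ℓ) (S ×ˢ I) := by
  refine (graphEquiv d).contDiff.comp_contDiffOn (contDiff_fst.contDiffOn.prodMk ?_)
  exact (h.comp contDiff_fst.contDiffOn fun p hp => hp.1).add contDiff_snd.contDiffOn

/-- Graph coordinates for a measurable height function preserve Lebesgue measure. -/
theorem measurePreserving_graphFlat {ℓ : Esp d → ℝ} (hℓ : Measurable ℓ) :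
    MeasurePreserving (graphFlat ℓ) ∧ MeasurableEmbedding (graphFlat ℓ) := by
  have h1 : MeasurePreserving (fun p : Esp d × ℝ => (p.1, ℓ p.1 + p.2)) := by
    refine (MeasurePreserving.id (volume : Measure (Esp d))).skew_product
      (g := fun x s => ℓ x + s) (by fun_prop) (Filter.Eventually.of_forall fun x => ?_)
    exact (measurePreserving_add_left volume (ℓ x)).map_eq
  let e : Esp d × ℝ ≃ᵐ Esp d × ℝ :=
    { toFun := fun p => (p.1, ℓ p.1 + p.2)
      invFun := fun p => (p.1, -ℓ p.1 + p.2)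
      left_inv := fun p => by simp
      right_inv := fun p => by simp
      measurable_toFun := by simp only [Equiv.coe_fn_mk]; fun_prop
      measurable_invFun := by simp only [Equiv.coe_fn_symm_mk]; fun_prop }
  exact ⟨(measurePreserving_graphEquiv d).comp h1,
    (graphEquiv d).toHomeomorph.measurableEmbedding.comp e.measurableEmbedding⟩

end Graph

section TimeDerivative

variable {E : Type*} [NormedAddCommGroup E] [NormedSpace ℝ E]

theorem HasFDerivAt.slice_left {f : E × ℝ → ℝ} {f' : E × ℝ →L[ℝ] ℝ} {x : E} {t : ℝ}
    (h : HasFDerivAt f f' (x, t)) :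
    HasFDerivAt (fun z => f (z, t)) (f'.comp (ContinuousLinearMap.inl ℝ E ℝ)) x :=
  HasFDerivAt.comp x h (hasFDerivAt_prodMk_left x t)

theorem HasFDerivAt.slice_right {f : E × ℝ → ℝ} {f' : E × ℝ →L[ℝ] ℝ} {x : E} {t : ℝ}
    (h : HasFDerivAt f f' (x, t)) : HasDerivAt (fun τ => f (x, τ)) (f' (0, 1)) t := by
  have h1 : HasDerivAt (fun τ : ℝ => (x, τ)) ((0 : E), (1 : ℝ)) t :=
    (hasDerivAt_const t x).prodMk (hasDerivAt_id t)
  exact HasFDerivAt.comp_hasDerivAt t h h1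

/-- Symmetry of the mixed derivatives `∂ₜ∂ₕ u = ∂ₕ∂ₜ u` when `u` and `∂ₜ u` are `C¹`. -/
theorem hasDerivAt_fderiv_slice {u : E → ℝ → ℝ} {x : E} {t : ℝ} {W' : E × ℝ →L[ℝ] ℝ}
    (hU : ∀ᶠ q in 𝓝 (x, t), DifferentiableAt ℝ (fun q : E × ℝ => u q.1 q.2) q)
    (hW : HasStrictFDerivAt (fun q : E × ℝ => deriv (u q.1) q.2) W' (x, t)) (h : E) :
    HasDerivAt (fun τ => fderiv ℝ (fun z => u z τ) x h) (W' (h, 0)) t := by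
  rw [hasDerivAt_iff_isLittleO, Asymptotics.isLittleO_iff]
  intro ε hε
  set ε' := ε / (‖h‖ + 1) with hε'
  have hε'0 : 0 < ε' := by positivity
  have h1 := (hasStrictFDerivAt_iff_isLittleO.1 hW).def hε'0
  obtain ⟨r, hr, hrb⟩ : ∃ r > 0, ∀ z ∈ ball x r, ∀ τ ∈ ball t r,
      DifferentiableAt ℝ (fun q : E × ℝ => u q.1 q.2) (z, τ) ∧
      ‖deriv (u z) τ - deriv (u x) τ - W' (z - x, 0)‖ ≤ ε' * ‖z - x‖ := by
    obtain ⟨r1, hr1, h1⟩ := Metric.eventually_nhds_iff_ball.1 h1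
    obtain ⟨r2, hr2, h2⟩ := Metric.eventually_nhds_iff_ball.1 hU
    refine ⟨min r1 r2, lt_min hr1 hr2, fun z hz τ hτ => ?_⟩
    have hz' := mem_ball.1 hz
    have hτ' := mem_ball.1 hτ
    rw [lt_min_iff] at hz' hτ'
    refine ⟨h2 (z, τ) ?_, ?_⟩
    · rw [mem_ball, Prod.dist_eq]; exact max_lt hz'.2 hτ'.2
    · have := h1 ((z, τ), (x, τ)) (by
        rw [mem_ball, Prod.dist_eq, Prod.dist_eq, Prod.dist_eq]
        refine max_lt (max_lt hz'.1 hτ'.1) (max_lt ?_ hτ'.1)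
        simpa using hr1)
      simpa [Prod.norm_def] using this
  have hball : ball t r ∈ 𝓝 t := ball_mem_nhds t hr
  filter_upwards [hball] with τ hτ
  have ht : t ∈ ball t r := mem_ball_self hr
  have key : ∀ᶠ s in 𝓝[≠] (0 : ℝ),
      ‖s⁻¹ • (u (x + s • h) τ - u x τ) - s⁻¹ • (u (x + s • h) t - u x t)
        - (τ - t) * W' (h, 0)‖ ≤ ε * ‖τ - t‖ := by
    have hs0 : ∀ᶠ s in 𝓝[≠] (0 : ℝ), x + s • h ∈ ball x r := by
      refine nhdsWithin_le_nhds ?_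
      have : Filter.Tendsto (fun s : ℝ => x + s • h) (𝓝 0) (𝓝 x) := by
        have : Continuous (fun s : ℝ => x + s • h) := by fun_prop
        simpa using this.tendsto 0
      exact this (ball_mem_nhds x hr)
    filter_upwards [hs0, self_mem_nhdsWithin] with s hs hsne
    have hsne : s ≠ 0 := hsne
    have hmv := Convex.norm_image_sub_le_of_norm_hasDerivWithin_le
      (f := fun τ => u (x + s • h) τ - u x τ - τ * (s * W' (h, 0)))
      (f' := fun τ => deriv (u (x + s • h)) τ - deriv (u x) τ - s * W' (h, 0))
      (C := ε' * (|s| * ‖h‖)) (s := ball t r) (x := t) (y := τ)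
      (fun σ hσ => ?_) (fun σ hσ => ?_) (convex_ball t r) ht hτ
    · have e1 : s⁻¹ • (u (x + s • h) τ - u x τ) - s⁻¹ • (u (x + s • h) t - u x t)
          - (τ - t) * W' (h, 0)
          = s⁻¹ * ((u (x + s • h) τ - u x τ - τ * (s * W' (h, 0)))
            - (u (x + s • h) t - u x t - t * (s * W' (h, 0)))) := by
        simp only [smul_eq_mul]; field_simp; ring
      rw [e1, norm_mul, norm_inv, Real.norm_eq_abs s]
      have hsp : 0 < |s| := abs_pos.2 hsne
      calc |s|⁻¹ * _ ≤ |s|⁻¹ * (ε' * (|s| * ‖h‖) * ‖τ - t‖) :=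
            mul_le_mul_of_nonneg_left hmv (by positivity)
        _ = ε' * ‖h‖ * ‖τ - t‖ := by field_simp
        _ ≤ ε * ‖τ - t‖ := by
            refine mul_le_mul_of_nonneg_right ?_ (norm_nonneg _)
            rw [hε', div_mul_eq_mul_div, div_le_iff₀ (by positivity)]
            nlinarith [norm_nonneg h]
    · have d1 := (hrb _ hs σ hσ).1.hasFDerivAt.slice_right.differentiableAt.hasDerivAt
      have d2 :=
        (hrb x (mem_ball_self hr) σ hσ).1.hasFDerivAt.slice_right.differentiableAt.hasDerivAt
      have d3 := (hasDerivAt_id σ).mul_const (s * W' (h, 0))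
      rw [one_mul] at d3
      exact ((d1.sub d2).sub d3).hasDerivWithinAt
    · have := (hrb _ hs σ hσ).2
      have e2 : W' (x + s • h - x, 0) = s * W' (h, 0) := by
        rw [add_sub_cancel_left, ← smul_eq_mul, ← map_smul]; simp
      rw [e2, add_sub_cancel_left, norm_smul] at this
      exact this
  have lim : ∀ σ ∈ ball t r, Filter.Tendsto (fun s : ℝ => s⁻¹ • (u (x + s • h) σ - u x σ))
      (𝓝[≠] 0) (𝓝 (fderiv ℝ (fun z => u z σ) x h)) := by
    intro σ hσ
    have hd := ((hrb x (mem_ball_self hr) σ hσ).1.hasFDerivAt.slice_left).differentiableAt.hasFDerivAt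
    exact (hd.hasLineDerivAt h).tendsto_slope_zero
  have := le_of_tendsto (((lim τ hτ).sub (lim t ht)).sub_const ((τ - t) * W' (h, 0))).norm key
  simpa [smul_eq_mul] using this

/-- The time derivative of a solution of a transport equation solves the same equation. -/
theorem transport_time_derivative {u : E → ℝ → ℝ} {x : E} {t : ℝ} {W' : E × ℝ →L[ℝ] ℝ}
    (hU : ∀ᶠ q in 𝓝 (x, t), DifferentiableAt ℝ (fun q : E × ℝ => u q.1 q.2) q)
    (hW : HasStrictFDerivAt (fun q : E × ℝ => deriv (u q.1) q.2) W' (x, t)) {h : E} {b : ℝ}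
    (hpde : ∀ᶠ τ in 𝓝 t, deriv (u x) τ + fderiv ℝ (fun z => u z τ) x h + b * u x τ = 0) :
    W' (h, 1) + b * deriv (u x) t = 0 := by
  have h1 := hasDerivAt_fderiv_slice hU hW h
  have h2 := hW.hasFDerivAt.slice_right
  have h3 : HasDerivAt (u x) (deriv (u x) t) t :=
    (hU.self_of_nhds.hasFDerivAt.slice_right).differentiableAt.hasDerivAt
  have h4 := (h2.add h1).add (h3.const_mul b)
  have h5 := h4.unique ((hasDerivAt_const t (0 : ℝ)).congr_of_eventuallyEq hpde)
  rw [show ((h, 1) : E × ℝ) = (0, 1) + (h, 0) by simp, map_add]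
  exact h5

/-- The transport equation extends to the initial time. -/
theorem transport_initial {u : E → ℝ → ℝ} {Ω : Set E} (hΩ : IsOpen Ω) {T : ℝ} (hT : 0 < T)
    (hU : ContDiffOn ℝ 1 (fun q : E × ℝ => u q.1 q.2) (closure Ω ×ˢ Icc 0 T))
    (hW : ContinuousOn (fun q : E × ℝ => deriv (u q.1) q.2) (closure Ω ×ˢ Icc 0 T))
    {x h : E} {b : ℝ} (hx : x ∈ Ω)
    (hpde : ∀ t ∈ Ioo 0 T, deriv (u x) t + fderiv ℝ (fun z => u z t) x h + b * u x t = 0)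
    {a : E → ℝ} (ha : ∀ z ∈ Ω, u z 0 = a z) :
    deriv (u x) 0 + fderiv ℝ a x h + b * a x = 0 := by
  have hx0 : (x, (0 : ℝ)) ∈ closure Ω ×ˢ Icc 0 T :=
    ⟨subset_closure hx, le_rfl, hT.le⟩
  obtain ⟨V, hVo, hxV, f', hf', hf'c⟩ := hU.exists_local_deriv hx0
  have hfilt : Filter.Tendsto (fun τ : ℝ => (x, τ)) (𝓝[>] 0)
      (𝓝[closure Ω ×ˢ Icc 0 T] (x, 0)) := by
    refine tendsto_nhdsWithin_iff.2 ⟨?_, ?_⟩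
    · exact (Continuous.tendsto (by fun_prop) (0 : ℝ)).mono_left nhdsWithin_le_nhds
    · filter_upwards [Ioo_mem_nhdsGT hT] with τ hτ
      exact ⟨subset_closure hx, hτ.1.le, hτ.2.le⟩
  have hV : ∀ᶠ τ in 𝓝[>] (0 : ℝ), (x, τ) ∈ V :=
    (tendsto_nhdsWithin_iff.1 hfilt).1 (hVo.mem_nhds hxV)
  have hfilt' : Filter.Tendsto (fun τ : ℝ => (x, τ)) (𝓝[>] 0)
      (𝓝[V ∩ closure Ω ×ˢ Icc 0 T] (x, 0)) :=
    tendsto_nhdsWithin_iff.2 ⟨(tendsto_nhdsWithin_iff.1 hfilt).1,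
      hV.and (tendsto_nhdsWithin_iff.1 hfilt).2⟩
  have l1 := (hW _ hx0).tendsto.comp hfilt
  have l2 := (hU.continuousOn _ hx0).tendsto.comp hfilt
  have l3 := (hf'c _ ⟨hxV, hx0⟩).tendsto.comp hfilt'
  have l4 : Filter.Tendsto (fun τ => f' (x, τ) (h, 0)) (𝓝[>] 0) (𝓝 (f' (x, 0) (h, 0))) :=
    ((ContinuousLinearMap.apply ℝ ℝ ((h, 0) : E × ℝ)).continuous.tendsto _).comp l3
  have lim := (l1.add l4).add (l2.const_mul b)
  have hev : ∀ᶠ τ in 𝓝[>] (0 : ℝ), deriv (u x) τ + f' (x, τ) (h, 0) + b * u x τ = 0 := by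
    filter_upwards [hV, Ioo_mem_nhdsGT hT] with τ hτV hτ
    have hmem : closure Ω ×ˢ Icc 0 T ∈ 𝓝 (x, τ) :=
      prod_mem_nhds (Filter.mem_of_superset (hΩ.mem_nhds hx) subset_closure)
        (Icc_mem_nhds hτ.1 hτ.2)
    have hd := ((hf' _ ⟨hτV, mem_of_mem_nhds hmem⟩).hasFDerivAt hmem).slice_left
    have := hpde τ hτ
    rw [hd.fderiv] at this
    simpa using this
  have hzero := tendsto_nhds_unique (lim.congr' hev) tendsto_const_nhds
  have hd0 : HasFDerivAt a ((f' (x, 0)).comp (ContinuousLinearMap.inl ℝ E ℝ)) x := by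
    have h1 : HasFDerivWithinAt (fun z => u z 0)
        ((f' (x, 0)).comp (ContinuousLinearMap.inl ℝ E ℝ)) Ω x :=
      HasFDerivWithinAt.comp x (hf' _ ⟨hxV, hx0⟩)
        (hasFDerivAt_prodMk_left x (0 : ℝ)).hasFDerivWithinAt
        fun z hz => ⟨subset_closure hz, le_rfl, hT.le⟩
    exact (h1.hasFDerivAt (hΩ.mem_nhds hx)).congr_of_eventuallyEq
      (Filter.eventuallyEq_of_mem (hΩ.mem_nhds hx) fun z hz => (ha z hz).symm)
  rw [hd0.fderiv, ← ha x hx]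
  simpa using hzero

end TimeDerivative

section GradientBound

variable {E : Type*} [NormedAddCommGroup E] [InnerProductSpace ℝ E] [FiniteDimensional ℝ E]

theorem norm_gradient (f : E → ℝ) (x : E) : ‖gradient f x‖ = ‖fderiv ℝ f x‖ := by
  simp [gradient]

/-- The supremum of the spatial gradient of a `C¹` function is square integrable in time and
bounds each gradient. -/
theorem spatial_gradient_sup {w : E → ℝ → ℝ} {Ω : Set E} (hΩ : IsOpen Ω)
    (hΩb : Bornology.IsBounded Ω) {T : ℝ}
    (hW : ContDiffOn ℝ 1 (fun q : E × ℝ => w q.1 q.2) (closure Ω ×ˢ Icc 0 T)) :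
    IntegrableOn (fun t => (⨆ x : Ω, ‖gradient (fun z => w z t) (x : E)‖) ^ 2) (Ioo 0 T) ∧
    ∀ x ∈ Ω, ∀ t ∈ Ioo 0 T, ‖fderiv ℝ (fun z => w z t) x‖ ≤
      ⨆ x : Ω, ‖gradient (fun z => w z t) (x : E)‖ := by
  have hK : IsCompact (closure Ω ×ˢ Icc 0 T) := hΩb.isCompact_closure.prod isCompact_Icc
  obtain ⟨C, hC⟩ := hW.exists_bound_fderiv_interior hK
  have hmem : ∀ x ∈ Ω, ∀ t ∈ Ioo 0 T, closure Ω ×ˢ Icc 0 T ∈ 𝓝 (x, t) := fun x hx t ht =>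
    prod_mem_nhds (Filter.mem_of_superset (hΩ.mem_nhds hx) subset_closure)
      (Icc_mem_nhds ht.1 ht.2)
  have hCD : ∀ x ∈ Ω, ∀ t ∈ Ioo 0 T, ContDiffAt ℝ 1 (fun q : E × ℝ => w q.1 q.2) (x, t) :=
    fun x hx t ht => hW.contDiffAt (hmem x hx t ht)
  have hsl : ∀ x ∈ Ω, ∀ t ∈ Ioo 0 T, fderiv ℝ (fun z => w z t) x =
      (fderiv ℝ (fun q : E × ℝ => w q.1 q.2) (x, t)).comp (ContinuousLinearMap.inl ℝ E ℝ) :=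
    fun x hx t ht =>
      (((hCD x hx t ht).differentiableAt one_ne_zero).hasFDerivAt.slice_left).fderiv
  have hbd : ∀ x ∈ Ω, ∀ t ∈ Ioo 0 T, ‖fderiv ℝ (fun z => w z t) x‖ ≤ C := by
    intro x hx t ht
    rw [hsl x hx t ht]
    have h0 := hC (x, t) (mem_interior_iff_mem_nhds.2 (hmem x hx t ht))
    calc _ ≤ _ := ContinuousLinearMap.opNorm_comp_le _ _
      _ ≤ C * 1 := mul_le_mul h0 (ContinuousLinearMap.norm_inl_le_one ℝ E ℝ) (norm_nonneg _)
          ((norm_nonneg _).trans h0)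
      _ = C := mul_one C
  have hBdd : ∀ t ∈ Ioo 0 T, BddAbove (range fun x : Ω =>
      ‖gradient (fun z => w z t) (x : E)‖) := by
    rintro t ht
    refine ⟨C, ?_⟩
    rintro _ ⟨x, rfl⟩
    simpa only [norm_gradient] using hbd x x.2 t ht
  refine ⟨?_, fun x hx t ht => ?_⟩
  swap
  · rw [← norm_gradient]
    exact le_ciSup (hBdd t ht) ⟨x, hx⟩
  set G : Ω → ℝ → ℝ := fun x => (Ioo 0 T).indicator fun t => ‖fderiv ℝ (fun z => w z t) (x : E)‖
    with hG
  have hGb : ∀ t, BddAbove (range fun x => G x t) := by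
    intro t
    refine ⟨max C 0, ?_⟩
    rintro _ ⟨x, rfl⟩
    by_cases ht : t ∈ Ioo 0 T
    · simp only [hG, indicator_of_mem ht]
      exact (hbd x x.2 t ht).trans (le_max_left _ _)
    · simp only [hG, indicator_of_notMem ht]
      exact le_max_right _ _
  have hGl : ∀ x, LowerSemicontinuous (G x) := by
    intro x t
    by_cases ht : t ∈ Ioo 0 T
    · refine ContinuousAt.lowerSemicontinuousAt ?_
      have h1 : ContinuousAt (fun t => ‖(fderiv ℝ (fun q : E × ℝ => w q.1 q.2)
          ((x : E), t)).comp (ContinuousLinearMap.inl ℝ E ℝ)‖) t := by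
        have h2 : ContinuousAt (fderiv ℝ (fun q : E × ℝ => w q.1 q.2)) ((x : E), t) :=
          (hCD x x.2 t ht).continuousAt_fderiv one_ne_zero
        have h3 : ContinuousAt (fun t : ℝ => fderiv ℝ (fun q : E × ℝ => w q.1 q.2)
            ((x : E), t)) t :=
          ContinuousAt.comp (f := fun t : ℝ => ((x : E), t)) h2 (by fun_prop)
        exact (h3.clm_comp continuousAt_const).norm
      refine h1.congr ?_
      filter_upwards [isOpen_Ioo.mem_nhds ht] with τ hτ
      simp only [hG, indicator_of_mem hτ, hsl x x.2 τ hτ]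
    · intro y hy
      simp only [hG, indicator_of_notMem ht] at hy
      exact Filter.Eventually.of_forall fun τ =>
        hy.trans_le (indicator_nonneg (fun _ _ => norm_nonneg _) τ)
  have hmeas : Measurable fun t => ⨆ x, G x t :=
    (lowerSemicontinuous_ciSup hGb hGl).measurable
  have heq : ∀ t ∈ Ioo 0 T, ⨆ x : Ω, ‖gradient (fun z => w z t) (x : E)‖ = ⨆ x, G x t := by
    intro t ht
    simp only [hG, indicator_of_mem ht, norm_gradient]
  rw [integrableOn_congr_fun (g := fun t => (⨆ x, G x t) ^ 2)
    (fun t ht => by simp only [heq t ht]) measurableSet_Ioo]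
  refine Measure.integrableOn_of_bounded (M := (max C 0) ^ 2) measure_Ioo_lt_top.ne
    (hmeas.pow_const 2).aestronglyMeasurable ?_
  refine Filter.Eventually.of_forall fun t => ?_
  have h0 : 0 ≤ ⨆ x, G x t := Real.iSup_nonneg fun x =>
    indicator_nonneg (fun _ _ => norm_nonneg _) t
  have h1 : ⨆ x, G x t ≤ max C 0 := by
    refine Real.iSup_le (fun x => ?_) (le_max_right _ _)
    by_cases ht : t ∈ Ioo 0 T
    · simp only [hG, indicator_of_mem ht]
      exact (hbd x x.2 t ht).trans (le_max_left _ _)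
    · simp only [hG, indicator_of_notMem ht]
      exact le_max_right _ _
  rw [Real.norm_of_nonneg (by positivity)]
  exact pow_le_pow_left₀ h0 h1 2

end GradientBound

section Geometry

variable {d : ℕ} {ρ₀ c : ℝ} {ℓ : Esp d → ℝ} {Ω : Set (Esp (d + 1))}

theorem graphFlat_mem
    (hΩsub : ∀ (x' : Esp d) (xn : ℝ), ‖x'‖ < ρ₀ → ℓ x' - c < xn → xn < ℓ x' →
      graphMk d x' xn ∈ Ω) {x : Esp d} {s : ℝ} (hx : ‖x‖ < ρ₀) (hs : s ∈ Ioo (-c) 0) :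
    graphFlat ℓ (x, s) ∈ Ω :=
  hΩsub x _ hx (by linarith [hs.1]) (by linarith [hs.2])

theorem graphFlat_mem_closure
    (hΩsub : ∀ (x' : Esp d) (xn : ℝ), ‖x'‖ < ρ₀ → ℓ x' - c < xn → xn < ℓ x' →
      graphMk d x' xn ∈ Ω) {x : Esp d} {s : ℝ} (hx : ‖x‖ < ρ₀) (hs : s ∈ Ioc (-c) 0) :
    graphFlat ℓ (x, s) ∈ closure Ω := by
  have h1 : Continuous fun r : ℝ => graphFlat ℓ (x, r) := by
    simp only [graphFlat_eq]; fun_prop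
  refine mem_closure_of_tendsto ((h1.tendsto s).mono_left (nhdsWithin_le_nhds (s := Iio s))) ?_
  filter_upwards [Ioo_mem_nhdsLT hs.1] with r hr
  exact graphFlat_mem hΩsub hx ⟨hr.1, hr.2.trans_le hs.2⟩

theorem graphFlat_zero (hℓ0 : ℓ 0 = 0) : graphFlat ℓ (0, 0) = 0 := by
  rw [graphFlat_eq, hℓ0]
  simp

theorem uniqueDiffWithinAt_closure_graph (hρ₀ : 0 < ρ₀) (hc : 0 < c)
    (hℓ : DifferentiableAt ℝ ℓ 0) (hℓ0 : ℓ 0 = 0)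
    (hΩsub : ∀ (x' : Esp d) (xn : ℝ), ‖x'‖ < ρ₀ → ℓ x' - c < xn → xn < ℓ x' →
      graphMk d x' xn ∈ Ω) : UniqueDiffWithinAt ℝ (closure Ω) 0 := by
  have hS : UniqueDiffWithinAt ℝ (ball (0 : Esp d) ρ₀ ×ˢ Ioo (-c) 0) (0, 0) := by
    refine uniqueDiffWithinAt_convex ((convex_ball _ _).prod (convex_Ioo _ _)) ?_ ?_
    · rw [(isOpen_ball.prod isOpen_Ioo).interior_eq]
      exact ⟨(0, -c / 2), mem_ball_self hρ₀, by constructor <;> linarith⟩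
    · rw [closure_prod_eq, closure_Ioo (by linarith)]
      exact ⟨subset_closure (mem_ball_self hρ₀), by linarith, le_rfl⟩
  have hd := (hasFDerivAt_graphFlat (ℓ := ℓ) (p := (0, 0)) hℓ).hasFDerivWithinAt
    (s := ball (0 : Esp d) ρ₀ ×ˢ Ioo (-c) 0)
  have h1 := hd.uniqueDiffWithinAt hS (Function.Surjective.denseRange fun y => by
    refine ⟨(((graphEquiv d).symm y).1,
      ((graphEquiv d).symm y).2 - fderiv ℝ ℓ 0 ((graphEquiv d).symm y).1), ?_⟩
    simp)
  rw [graphFlat_zero hℓ0] at h1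
  refine h1.mono ?_
  rintro _ ⟨⟨x, s⟩, ⟨hx, hs⟩, rfl⟩
  exact subset_closure (graphFlat_mem hΩsub (by simpa using hx) hs)

/-- Near a point of unique differentiability where the gradients are independent, the family of
differentials is uniformly bounded below. -/
theorem exists_differentials_lower_bound {n : ℕ} {Ω : Set (Esp n)} (hΩ : IsOpen Ω)
    {x₀ : Esp n} (hx₀ : x₀ ∈ closure Ω) (hu : UniqueDiffWithinAt ℝ (closure Ω) x₀)
    {a : Fin n → Esp n → ℝ} (ha : ∀ k, ContDiffOn ℝ 1 (a k) (closure Ω))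
    (hdet : (Matrix.of fun (i k : Fin n) => gradient (a k) x₀ i).det ≠ 0) :
    ∃ c₀ > 0, ∀ᶠ x in 𝓝[Ω] x₀, ∀ F : Esp n, c₀ * ‖F‖ ^ 2 ≤ ∑ k, (fderiv ℝ (a k) x F) ^ 2 := by
  have hlim : ∀ k, Filter.Tendsto (fderiv ℝ (a k)) (𝓝[Ω] x₀) (𝓝 (fderiv ℝ (a k) x₀)) := by
    intro k
    obtain ⟨V, hVo, hV, f', hf', hf'c⟩ := (ha k).exists_local_deriv hx₀
    have hdiff : DifferentiableAt ℝ (a k) x₀ := by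
      by_contra hnd
      refine hdet (Matrix.det_eq_zero_of_column_eq_zero k fun i => ?_)
      simp [gradient, fderiv_zero_of_not_differentiableAt hnd]
    have h0 : f' x₀ = fderiv ℝ (a k) x₀ :=
      hu.eq (hf' x₀ ⟨hV, hx₀⟩) hdiff.hasFDerivAt.hasFDerivWithinAt
    rw [← h0]
    have hmem : ∀ᶠ x in 𝓝[Ω] x₀, x ∈ V ∩ Ω :=
      Filter.inter_mem (nhdsWithin_le_nhds (hVo.mem_nhds hV)) self_mem_nhdsWithin
    have h1 : Filter.Tendsto f' (𝓝[Ω] x₀) (𝓝 (f' x₀)) := by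
      refine (hf'c x₀ ⟨hV, hx₀⟩).tendsto.mono_left ?_
      refine nhdsWithin_le_iff.2 ?_
      filter_upwards [hmem] with x hx using ⟨hx.1, subset_closure hx.2⟩
    refine h1.congr' ?_
    filter_upwards [hmem] with x hx
    exact ((hf' x ⟨hx.1, subset_closure hx.2⟩).hasFDerivAt
      (Filter.mem_of_superset (hΩ.mem_nhds hx.2) subset_closure)).fderiv.symm
  set L : Esp n →L[ℝ] (Fin n → ℝ) := ContinuousLinearMap.pi fun k => fderiv ℝ (a k) x₀ with hL
  have hinj : Function.Injective (L : Esp n →ₗ[ℝ] (Fin n → ℝ)) := by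
    rw [injective_iff_map_eq_zero]
    intro F hF
    have h1 : Matrix.vecMul (fun i => F i) (Matrix.of fun (i k : Fin n) =>
        gradient (a k) x₀ i) = 0 := by
      funext k
      have h2 : fderiv ℝ (a k) x₀ F = 0 := congrFun hF k
      rw [← inner_gradient_left, PiLp.inner_apply] at h2
      simpa [Matrix.vecMul, dotProduct] using h2
    have h3 := Matrix.eq_zero_of_vecMul_eq_zero hdet h1
    ext i
    exact congrFun h3 i
  obtain ⟨K, hK, hKL⟩ := (LinearMap.injective_iff_antilipschitz _).1 hinj
  have hK' : (0 : ℝ) < K := hK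
  refine ⟨(4 * (K : ℝ) ^ 2)⁻¹, by positivity, ?_⟩
  have hev : ∀ᶠ x in 𝓝[Ω] x₀, ∀ k, ‖fderiv ℝ (a k) x - fderiv ℝ (a k) x₀‖ < (2 * (K : ℝ))⁻¹ := by
    rw [Filter.eventually_all]
    intro k
    simpa only [dist_eq_norm] using Metric.tendsto_nhds.1 (hlim k) (2 * (K : ℝ))⁻¹ (by positivity)
  filter_upwards [hev] with x hx F
  set S := ∑ k, (fderiv ℝ (a k) x F) ^ 2 with hS
  have hS0 : 0 ≤ S := Finset.sum_nonneg fun k _ => sq_nonneg _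
  have h1 : ‖L F‖ ≤ √S + (2 * (K : ℝ))⁻¹ * ‖F‖ := by
    refine (pi_norm_le_iff_of_nonneg (by positivity)).2 fun k => ?_
    have h2 : |fderiv ℝ (a k) x F| ≤ √S := by
      rw [← Real.sqrt_sq_eq_abs]
      exact Real.sqrt_le_sqrt (Finset.single_le_sum
        (f := fun k => (fderiv ℝ (a k) x F) ^ 2) (fun _ _ => sq_nonneg _) (Finset.mem_univ k))
    have h3 : ‖(fderiv ℝ (a k) x - fderiv ℝ (a k) x₀) F‖ ≤ (2 * (K : ℝ))⁻¹ * ‖F‖ :=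
      (ContinuousLinearMap.le_opNorm _ _).trans
        (mul_le_mul_of_nonneg_right (hx k).le (norm_nonneg _))
    have h4 : L F k = fderiv ℝ (a k) x F - (fderiv ℝ (a k) x - fderiv ℝ (a k) x₀) F := by
      simp [hL]
    rw [h4]
    exact (norm_sub_le _ _).trans (add_le_add h2 h3)
  have h5 : ‖F‖ ≤ K * ‖L F‖ := by
    have := hKL.le_mul_dist F 0
    simpa using this
  have h6 : ‖F‖ ≤ 2 * K * √S := by
    have : ‖F‖ ≤ K * (√S + (2 * (K : ℝ))⁻¹ * ‖F‖) :=
      h5.trans (mul_le_mul_of_nonneg_left h1 hK'.le)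
    have e : K * (√S + (2 * (K : ℝ))⁻¹ * ‖F‖) = K * √S + ‖F‖ / 2 := by field_simp
    linarith
  rw [inv_mul_le_iff₀ (by positivity)]
  calc ‖F‖ ^ 2 ≤ (2 * K * √S) ^ 2 := pow_le_pow_left₀ (norm_nonneg _) h6 2
    _ = 4 * (K : ℝ) ^ 2 * S := by rw [mul_pow, Real.sq_sqrt hS0]; ring

end Geometry

section Drift

variable {d : ℕ}

/-- The horizontal component of a vector field in graph coordinates. -/
def driftHor (ℓ : Esp d → ℝ) (H : Esp (d + 1) → Esp (d + 1)) (p : Esp d × ℝ) : Esp d :=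
  ((graphEquiv d).symm (H (graphFlat ℓ p))).1

/-- The vertical component of a vector field in graph coordinates. -/
def driftVer (ℓ : Esp d → ℝ) (H : Esp (d + 1) → Esp (d + 1)) (p : Esp d × ℝ) : ℝ :=
  ((graphEquiv d).symm (H (graphFlat ℓ p))).2 - fderiv ℝ ℓ p.1 (driftHor ℓ H p)

/-- The (unnormalised) upward normal of the graph of `ℓ`. -/
def graphNormal (ℓ : Esp d → ℝ) (x : Esp d) : Esp (d + 1) := graphMk d (-(gradient ℓ x)) 1

theorem norm_graphNormal (ℓ : Esp d → ℝ) (x : Esp d) : ‖graphNormal ℓ x‖ = omegaW d ℓ x := by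
  rw [omegaW, ← Real.sqrt_sq (norm_nonneg (graphNormal ℓ x)), graphNormal, norm_graphMk_sq]
  congr 1
  rw [norm_neg]
  ring

theorem inner_graphNormal (ℓ : Esp d → ℝ) (x : Esp d) (y : Esp (d + 1)) :
    ⟪y, graphNormal ℓ x⟫ = ((graphEquiv d).symm y).2 - fderiv ℝ ℓ x ((graphEquiv d).symm y).1 := by
  obtain ⟨q, rfl⟩ := (graphEquiv d).surjective y
  rw [graphEquiv_apply, graphNormal, inner_graphMk, inner_neg_right, inner_gradient_right,
    conj_trivial, ← graphEquiv_apply, (graphEquiv d).symm_apply_apply]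
  ring

theorem driftVer_eq_inner (ℓ : Esp d → ℝ) (H : Esp (d + 1) → Esp (d + 1)) (p : Esp d × ℝ) :
    driftVer ℓ H p = ⟪H (graphFlat ℓ p), graphNormal ℓ p.1⟫ :=
  (inner_graphNormal _ _ _).symm

theorem fderiv_graphFlat_drift {ℓ : Esp d → ℝ} (H : Esp (d + 1) → Esp (d + 1)) {p : Esp d × ℝ}
    (h : DifferentiableAt ℝ ℓ p.1) :
    fderiv ℝ (graphFlat ℓ) p (driftHor ℓ H p, driftVer ℓ H p) = H (graphFlat ℓ p) := by
  rw [(hasFDerivAt_graphFlat h).fderiv]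
  simp [driftVer, driftHor]

theorem contDiffOn_drift {ℓ : Esp d → ℝ} {H : Esp (d + 1) → Esp (d + 1)} {ρ₀ : ℝ}
    (hℓ : ContDiffOn ℝ 2 ℓ (closedBall 0 ρ₀)) {U : Set (Esp (d + 1))}
    (hH : ContDiffOn ℝ 1 H U) {S : Set (Esp d × ℝ)} (hS : ∀ p ∈ S, ‖p.1‖ < ρ₀)
    (hSU : ∀ p ∈ S, graphFlat ℓ p ∈ U) :
    ContDiffOn ℝ 1 (driftHor ℓ H) S ∧ ContDiffOn ℝ 1 (driftVer ℓ H) S := by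
  have hΦ : ContDiffOn ℝ 1 (graphFlat ℓ) S :=
    ((contDiffOn_graphFlat (hℓ.of_le one_le_two) univ).mono fun p hp =>
      ⟨mem_closedBall_zero_iff.2 (hS p hp).le, mem_univ _⟩)
  have hHΦ : ContDiffOn ℝ 1 (fun p => (graphEquiv d).symm (H (graphFlat ℓ p))) S :=
    (graphEquiv d).symm.contDiff.comp_contDiffOn (hH.comp hΦ hSU)
  have hA : ContDiffOn ℝ 1 (driftHor ℓ H) S := hHΦ.fst
  have hD : ContDiffOn ℝ 1 (fderiv ℝ ℓ) (ball 0 ρ₀) :=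
    (hℓ.mono ball_subset_closedBall).fderiv_of_isOpen isOpen_ball (by norm_num)
  refine ⟨hA, hHΦ.snd.sub (ContDiffOn.clm_apply ?_ hA)⟩
  exact hD.comp contDiff_fst.contDiffOn fun p hp => mem_ball_zero_iff.2 (hS p hp)

/-- Bound for the divergence in graph coordinates. -/
theorem abs_div_drift_le {ℓ : Esp d → ℝ} {H : Esp (d + 1) → Esp (d + 1)} {M L : ℝ} (hM : 0 ≤ M)
    (hL : 0 ≤ L)
    {x : Esp d} {s : ℝ} (hℓ : DifferentiableAt ℝ ℓ x) (hℓL : ‖fderiv ℝ ℓ x‖ ≤ L)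
    (hH : DifferentiableAt ℝ H (graphFlat ℓ (x, s)))
    (hHM : ‖fderiv ℝ H (graphFlat ℓ (x, s))‖ ≤ M)
    (hB : DifferentiableAt ℝ (driftVer ℓ H) (x, s)) :
    |∑ i, fderiv ℝ (fun p => driftHor ℓ H p i) (x, s) (EuclideanSpace.single i 1, 0)
      + fderiv ℝ (driftVer ℓ H) (x, s) (0, 1)| ≤ (d + 1) * (M * (1 + L)) := by
  set e := (graphEquiv d).symm with he
  have hΦ := hasFDerivAt_graphFlat (p := (x, s)) hℓ
  have hHΦ : HasFDerivAt (fun p => e (H (graphFlat ℓ p))) _ (x, s) :=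
    e.hasFDerivAt.comp (x, s) (hH.hasFDerivAt.comp (x, s) hΦ)
  have hnorm : ∀ q : Esp d × ℝ, ‖graphMk d q.1 q.2‖ ≤ ‖q.1‖ + |q.2| := by
    intro q
    refine abs_le_of_sq_le_sq' ?_ (by positivity) |>.2
    rw [norm_graphMk_sq, ← sq_abs q.2]
    nlinarith [norm_nonneg q.1, abs_nonneg q.2]
  have h1 : ∀ i, |fderiv ℝ (fun p => driftHor ℓ H p i) (x, s) (EuclideanSpace.single i 1, 0)|
      ≤ M * (1 + L) := by
    intro i
    have hi : HasFDerivAt (fun p => driftHor ℓ H p i) _ (x, s) :=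
      (EuclideanSpace.proj (𝕜 := ℝ) i).hasFDerivAt.comp (x, s) hHΦ.fst
    rw [hi.fderiv]
    set q : Esp d × ℝ := (EuclideanSpace.single i 1, fderiv ℝ ℓ x (EuclideanSpace.single i 1))
      with hq
    have e1 : ‖graphMk d q.1 q.2‖ ≤ 1 + L := by
      refine (hnorm q).trans (add_le_add (by simp [hq]) ?_)
      refine ((fderiv ℝ ℓ x).le_opNorm (EuclideanSpace.single i 1)).trans ?_
      simpa using hℓL
    have e2 : ‖fderiv ℝ H (graphFlat ℓ (x, s)) (graphMk d q.1 q.2)‖ ≤ M * (1 + L) :=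
      (ContinuousLinearMap.le_opNorm _ _).trans (mul_le_mul hHM e1 (norm_nonneg _) hM)
    have e3 := (norm_symm_fst_le (fderiv ℝ H (graphFlat ℓ (x, s)) (graphMk d q.1 q.2))).trans e2
    refine le_trans (le_of_eq ?_) ((PiLp.norm_apply_le _ i).trans e3)
    simp [hq, he, graphEquiv_apply]
  have h2 : |fderiv ℝ (driftVer ℓ H) (x, s) (0, 1)| ≤ M * (1 + L) := by
    have l1 := hB.hasFDerivAt.slice_right
    have hline : HasDerivAt (fun r : ℝ => e (H (graphFlat ℓ (x, r)))) _ s :=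
      hHΦ.comp_hasDerivAt s ((hasDerivAt_const s x).prodMk (hasDerivAt_id s))
    have l2 : HasDerivAt (fun r : ℝ => driftVer ℓ H (x, r)) _ s :=
      (ContinuousLinearMap.snd ℝ (Esp d) ℝ - (fderiv ℝ ℓ x).comp
        (ContinuousLinearMap.fst ℝ (Esp d) ℝ)).hasFDerivAt.comp_hasDerivAt s hline
    rw [l1.unique l2]
    set y := fderiv ℝ H (graphFlat ℓ (x, s)) (graphMk d 0 1) with hy
    have e1 : ‖y‖ ≤ M := by
      refine (ContinuousLinearMap.le_opNorm _ _).trans ?_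
      have := hnorm ((0 : Esp d), (1 : ℝ))
      simp only [norm_zero, abs_one, zero_add] at this
      exact (mul_le_mul hHM this (norm_nonneg _) hM).trans (mul_one M).le
    have e2 : |(e y).2 - fderiv ℝ ℓ x (e y).1| ≤ M + L * M := by
      refine (abs_sub _ _).trans (add_le_add ((abs_symm_snd_le y).trans e1) ?_)
      exact (ContinuousLinearMap.le_opNorm _ _).trans
        (mul_le_mul hℓL ((norm_symm_fst_le y).trans e1) (norm_nonneg _) hL)
    refine le_trans (le_of_eq ?_) (e2.trans (by linarith))
    simp [hy, graphEquiv_apply]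
  calc _ ≤ |∑ i, fderiv ℝ (fun p => driftHor ℓ H p i) (x, s) (EuclideanSpace.single i 1, 0)|
        + |fderiv ℝ (driftVer ℓ H) (x, s) (0, 1)| := abs_add_le _ _
    _ ≤ ∑ i : Fin d, M * (1 + L) + M * (1 + L) :=
        add_le_add ((Finset.abs_sum_le_sum_abs _ _).trans (Finset.sum_le_sum fun i _ => h1 i)) h2
    _ = _ := by simp; ring

end Drift

section Parameters

variable {d : ℕ}

theorem exists_slab_parameters {ρ₀ c T M δ₀ : ℝ} (hT : 0 < T) (hρ₀ : 0 < ρ₀) (hδ₀ : 0 < δ₀)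
    (hc : 0 < c) {ℓ : Esp d → ℝ} (hℓ : ContDiffOn ℝ 2 ℓ (closedBall 0 ρ₀)) (hℓ0 : ℓ 0 = 0)
    {P : Esp (d + 1) → Prop} (hP : ∀ᶠ y in 𝓝 0, P y) :
    ∃ ρ η : ℝ, 0 < ρ ∧ ρ < ρ₀ ∧ 0 < η ∧ η < ρ ^ 2 ∧ η ≤ 1 ∧ η < c ∧ η / T ≤ δ₀ / 4 ∧
      ∀ (x : Esp d) (s : ℝ), ‖x‖ ≤ ρ → s ∈ Icc (-η) 0 → P (graphFlat ℓ (x, s)) ∧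
        M * ‖graphFlat ℓ (x, s)‖ * ‖graphNormal ℓ x‖ + M * ‖graphNormal ℓ x - graphNormal ℓ 0‖
          + 2 * (‖x‖ * M) ≤ δ₀ / 2 := by
  have hball : closedBall (0 : Esp d) ρ₀ ∈ 𝓝 (0 : Esp d) := closedBall_mem_nhds 0 hρ₀
  have hℓat : ContDiffAt ℝ 2 ℓ 0 := hℓ.contDiffAt hball
  have hN : ContinuousAt (graphNormal ℓ) 0 := by
    have h1 : ContinuousAt (fderiv ℝ ℓ) 0 := hℓat.continuousAt_fderiv two_ne_zero
    have h2 : ContinuousAt (fun x => gradient ℓ x) 0 :=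
      (InnerProductSpace.toDual ℝ (Esp d)).symm.continuous.continuousAt.comp h1
    exact ((graphEquiv d).continuous.continuousAt).comp
      (f := fun x => (-(gradient ℓ x), (1 : ℝ))) (h2.neg.prodMk continuousAt_const)
  have hΦ : ContinuousAt (graphFlat ℓ) (0, 0) :=
    (hasFDerivAt_graphFlat (p := (0, 0)) (hℓat.differentiableAt two_ne_zero)).continuousAt
  have hN' : ContinuousAt (fun p : Esp d × ℝ => graphNormal ℓ p.1) (0, 0) :=
    ContinuousAt.comp (f := Prod.fst) (x := ((0 : Esp d), (0 : ℝ))) hN continuousAt_fst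
  have hG : ContinuousAt (fun p : Esp d × ℝ => M * ‖graphFlat ℓ p‖ * ‖graphNormal ℓ p.1‖
      + M * ‖graphNormal ℓ p.1 - graphNormal ℓ 0‖ + 2 * (‖p.1‖ * M)) (0, 0) := by
    fun_prop
  have hev1 := hG.eventually_lt (continuousAt_const (y := δ₀ / 2)) (by
    rw [graphFlat_zero hℓ0]; simpa using hδ₀)
  have hP' : ∀ᶠ y in 𝓝 (graphFlat ℓ (0, 0)), P y := by rwa [graphFlat_zero hℓ0]
  have hev2 := hΦ.eventually hP'
  obtain ⟨r, hr, hrb⟩ := Metric.eventually_nhds_iff_ball.1 (hev1.and hev2)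
  set ρ := min (r / 2) (ρ₀ / 2) with hρ
  have hρ0 : 0 < ρ := lt_min (by linarith) (by linarith)
  have hρr : ρ < r := (min_le_left _ _).trans_lt (by linarith)
  set η := min (min (ρ ^ 2 / 2) ρ) (min (min 1 (c / 2)) (T * (δ₀ / 4))) with hη
  have hη1 : η ≤ ρ ^ 2 / 2 := (min_le_left _ _).trans (min_le_left _ _)
  have hη2 : η ≤ ρ := (min_le_left _ _).trans (min_le_right _ _)
  have hη3 : η ≤ 1 := (min_le_right _ _).trans ((min_le_left _ _).trans (min_le_left _ _))
  have hη4 : η ≤ c / 2 := (min_le_right _ _).trans ((min_le_left _ _).trans (min_le_right _ _))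
  have hη5 : η ≤ T * (δ₀ / 4) := (min_le_right _ _).trans (min_le_right _ _)
  have hη0 : 0 < η := by
    refine lt_min (lt_min (by positivity) hρ0) (lt_min (lt_min one_pos (by linarith)) ?_)
    positivity
  refine ⟨ρ, η, hρ0, (min_le_right _ _).trans_lt (by linarith), hη0,
    by nlinarith [pow_pos hρ0 2], hη3, by linarith, ?_, fun x s hx hs => ?_⟩
  · rw [div_le_iff₀ hT]; linarith
  · have hmem : ((x, s) : Esp d × ℝ) ∈ ball ((0 : Esp d), (0 : ℝ)) r := by
      rw [mem_ball, Prod.dist_eq, dist_zero_right, Real.dist_eq, sub_zero]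
      refine max_lt (hx.trans_lt hρr) (lt_of_le_of_lt ?_ hρr)
      rw [abs_of_nonpos hs.2]
      linarith [hs.1]
    exact ⟨(hrb _ hmem).2, (hrb _ hmem).1.le⟩

/-- Uniform transversality of an admissible drift near the base point. -/
theorem drift_lower_bound {M δ₀ : ℝ} {ℓ : Esp d → ℝ} {H : Esp (d + 1) → Esp (d + 1)}
    {U : Set (Esp (d + 1))} (hUo : IsOpen U) (hU : Convex ℝ U) (hH : ContDiffOn ℝ 1 H U)
    (hHM : ∀ x ∈ U, ‖H x‖ ≤ M) (hDH : ∀ x ∈ U, ‖fderiv ℝ H x‖ ≤ M) (h0 : (0 : Esp (d + 1)) ∈ U)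
    (hδ₀ : 0 < δ₀) (hν : δ₀ < ⟪H 0, nuUp d ℓ 0⟫) {x : Esp d} {s : ℝ} (hxU : graphFlat ℓ (x, s) ∈ U)
    (hsmall : M * ‖graphFlat ℓ (x, s)‖ * ‖graphNormal ℓ x‖
      + M * ‖graphNormal ℓ x - graphNormal ℓ 0‖ + 2 * (‖x‖ * M) ≤ δ₀ / 2) :
    δ₀ / 2 ≤ driftVer ℓ H (x, s) - 2 * ⟪x, driftHor ℓ H (x, s)⟫ := by
  set y := graphFlat ℓ (x, s) with hy
  have h1 : ‖H y - H 0‖ ≤ M * ‖y‖ := by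
    have := hU.norm_image_sub_le_of_norm_fderiv_le (f := H)
      (fun z hz => (hH.contDiffAt (hUo.mem_nhds hz)).differentiableAt one_ne_zero) hDH h0 hxU
    simpa using this
  have h2 : δ₀ ≤ ⟪H 0, graphNormal ℓ 0⟫ := by
    have hω : 1 ≤ √(1 + ‖gradient ℓ 0‖ ^ 2) := by
      rw [Real.one_le_sqrt]; linarith [sq_nonneg ‖gradient ℓ 0‖]
    rw [nuUp, inner_smul_right, inv_mul_eq_div, lt_div_iff₀ (by linarith)] at hν
    have : δ₀ * 1 ≤ δ₀ * √(1 + ‖gradient ℓ 0‖ ^ 2) := mul_le_mul_of_nonneg_left hω hδ₀.le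
    unfold graphNormal
    linarith
  have h3 : driftVer ℓ H (x, s) = ⟪H 0, graphNormal ℓ 0⟫ + ⟪H y - H 0, graphNormal ℓ x⟫
      + ⟪H 0, graphNormal ℓ x - graphNormal ℓ 0⟫ := by
    rw [driftVer_eq_inner, inner_sub_left, inner_sub_right]
    ring
  have h4 : |⟪H y - H 0, graphNormal ℓ x⟫| ≤ M * ‖y‖ * ‖graphNormal ℓ x‖ :=
    (abs_real_inner_le_norm _ _).trans (mul_le_mul_of_nonneg_right h1 (norm_nonneg _))
  have h5 : |⟪H 0, graphNormal ℓ x - graphNormal ℓ 0⟫|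
      ≤ M * ‖graphNormal ℓ x - graphNormal ℓ 0‖ :=
    (abs_real_inner_le_norm _ _).trans (mul_le_mul_of_nonneg_right (hHM 0 h0) (norm_nonneg _))
  have h6 : |⟪x, driftHor ℓ H (x, s)⟫| ≤ ‖x‖ * M :=
    (abs_real_inner_le_norm _ _).trans (mul_le_mul_of_nonneg_left
      ((norm_symm_fst_le _).trans (hHM y hxU)) (norm_nonneg _))
  rw [h3]
  linarith [neg_abs_le ⟪H y - H 0, graphNormal ℓ x⟫, le_abs_self ⟪x, driftHor ℓ H (x, s)⟫,
    neg_abs_le ⟪H 0, graphNormal ℓ x - graphNormal ℓ 0⟫]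

end Parameters

section Terms

variable {d : ℕ}

/-- Comparison of an iterated integral with the integral of a bounded continuous majorant. -/
theorem iterated_integral_le_of_le_indicator {ρ₀ T C K : ℝ} {f : ℝ → Esp d → ℝ}
    (hf : ContinuousOn (fun q : ℝ × Esp d => f q.1 q.2) (Ioo 0 T ×ˢ ball 0 ρ₀))
    (hfb : ∀ t ∈ Ioo 0 T, ∀ x ∈ ball (0 : Esp d) ρ₀, |f t x| ≤ C) {G : ℝ → Esp d → ℝ}
    (hG0 : ∀ t ∈ Ioo 0 T, ∀ x, 0 ≤ G t x)
    (hG : ∀ t ∈ Ioo 0 T, ∀ x, G t x ≤ (ball (0 : Esp d) ρ₀).indicator (fun x => K * f t x) x) :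
    ∫ t in Ioo 0 T, ∫ x, G t x ≤ K * ∫ t in Ioo 0 T, ∫ x in ball (0 : Esp d) ρ₀, f t x := by
  have hfInt : Integrable (fun q : ℝ × Esp d => f q.1 q.2)
      ((volume.restrict (Ioo 0 T)).prod (volume.restrict (ball (0 : Esp d) ρ₀))) := by
    have : IsFiniteMeasure (volume.restrict (ball (0 : Esp d) ρ₀)) :=
      isFiniteMeasure_restrict.2 measure_ball_lt_top.ne
    refine Integrable.of_bound ?_ C ?_ <;> rw [Measure.prod_restrict]
    · exact hf.aestronglyMeasurable (measurableSet_Ioo.prod measurableSet_ball)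
    · exact (ae_restrict_iff' (measurableSet_Ioo.prod measurableSet_ball)).2
        (Filter.Eventually.of_forall fun q hq => hfb q.1 hq.1 q.2 hq.2)
  rw [← integral_const_mul]
  refine integral_mono_of_nonneg ?_ (hfInt.integral_prod_left.const_mul K) ?_
  · filter_upwards [ae_restrict_mem measurableSet_Ioo] with t ht
    exact integral_nonneg (hG0 t ht)
  · filter_upwards [ae_restrict_mem measurableSet_Ioo, hfInt.prod_right_ae] with t ht hit
    change ∫ x, G t x ≤ K * ∫ x in ball (0 : Esp d) ρ₀, f t x
    rw [← integral_const_mul, ← integral_indicator measurableSet_ball]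
    refine integral_mono_of_nonneg (Filter.Eventually.of_forall (hG0 t ht)) ?_
      (Filter.Eventually.of_forall (hG t ht))
    exact (integrable_indicator_iff measurableSet_ball).2 (hit.const_mul K)

theorem graphDomain_eq_image {ρ₁ : ℝ} {ℓ ℓ' ℓt : Esp d → ℝ}
    (h : ∀ x, ‖x‖ < ρ₁ → ℓ' x = ℓ x) :
    graphDomain d ρ₁ ℓ ℓt = graphFlat ℓ' '' {p | ‖p.1‖ < ρ₁ ∧ -ℓt p.1 < p.2 ∧ p.2 < 0} := by
  ext y
  constructor
  · rintro ⟨x, r, hx, h1, h2, rfl⟩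
    refine ⟨(x, r - ℓ x), ⟨hx, by simp only; linarith, by simp only; linarith⟩, ?_⟩
    simp [graphFlat, h x hx]
  · rintro ⟨⟨x, s⟩, ⟨hx, h1, h2⟩, rfl⟩
    refine ⟨x, ℓ x + s, hx, ?_, ?_, by simp [graphFlat, h x hx]⟩
    · simp only at h1; linarith
    · simp only at h2; linarith

/-- An integral over a graph domain is controlled by a weighted integral in graph coordinates. -/
theorem setIntegral_graphDomain_le {ρ₀ ρ₁ η κ : ℝ} (hρ : ρ₁ ≤ ρ₀) (hκ : 0 < κ)
    {ℓ ℓt : Esp d → ℝ} (hℓ : ContinuousOn ℓ (ball 0 ρ₀)) (hℓt : Continuous ℓt)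
    (hℓtη : ∀ x, ‖x‖ < ρ₁ → ℓt x ≤ η) {f : Esp (d + 1) → ℝ} (hf : ∀ y, 0 ≤ f y)
    {W : Esp d × ℝ → ℝ} (hW0 : ∀ p, 0 ≤ W p)
    (hW : ∀ x s, ‖x‖ < ρ₁ → -ℓt x < s → s < 0 → κ ≤ W (x, s))
    (hfInt : Integrable (fun p => f (graphFlat ℓ p) * W p)
      ((volume : Measure (Esp d)).prod (volume.restrict (Ioo (-η) 0)))) :
    ∫ y in graphDomain d ρ₁ ℓ ℓt, f y ≤ κ⁻¹ * ∫ p, f (graphFlat ℓ p) * W p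
      ∂((volume : Measure (Esp d)).prod (volume.restrict (Ioo (-η) 0))) := by
  classical
  set ℓ' := (ball (0 : Esp d) ρ₀).indicator ℓ with hℓ'
  have hmeas : Measurable ℓ' := by
    have := hℓ.measurable_piecewise (g := fun _ => (0 : ℝ)) continuousOn_const measurableSet_ball
    rw [hℓ', ← Set.piecewise_eq_indicator]
    exact this
  have heq : ∀ x, ‖x‖ < ρ₁ → ℓ' x = ℓ x := fun x hx =>
    indicator_of_mem (mem_ball_zero_iff.2 (hx.trans_le hρ)) _
  obtain ⟨hmp, hemb⟩ := measurePreserving_graphFlat hmeas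
  set S : Set (Esp d × ℝ) := {p | ‖p.1‖ < ρ₁ ∧ -ℓt p.1 < p.2 ∧ p.2 < 0} with hS
  have hSm : MeasurableSet S := by
    refine IsOpen.measurableSet ?_
    have e1 : Continuous fun p : Esp d × ℝ => ‖p.1‖ := by fun_prop
    have e2 : Continuous fun p : Esp d × ℝ => -ℓt p.1 := by fun_prop
    exact (isOpen_lt e1 continuous_const).inter
      ((isOpen_lt e2 continuous_snd).inter (isOpen_lt continuous_snd continuous_const))
  have hSsub : S ⊆ univ ×ˢ Ioo (-η) 0 := fun p hp =>
    ⟨mem_univ _, by linarith [hp.2.1, hℓtη p.1 hp.1], hp.2.2⟩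
  rw [slab_halfspace_eq] at hfInt ⊢
  rw [graphDomain_eq_image heq, hmp.setIntegral_image_emb hemb, ← integral_const_mul]
  have hfInt' : IntegrableOn (fun p => κ⁻¹ * (f (graphFlat ℓ p) * W p)) (univ ×ˢ Ioo (-η) 0) :=
    hfInt.const_mul κ⁻¹
  calc ∫ p in S, f (graphFlat ℓ' p) ≤ ∫ p in S, κ⁻¹ * (f (graphFlat ℓ p) * W p) := by
        refine integral_mono_of_nonneg (Filter.Eventually.of_forall fun p => hf _)
          (hfInt'.mono_set hSsub) ?_
        filter_upwards [ae_restrict_mem hSm] with p hp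
        have e1 : graphFlat ℓ' p = graphFlat ℓ p := by simp [graphFlat, heq p.1 hp.1]
        have e2 := hW p.1 p.2 hp.1 hp.2.1 hp.2.2
        rw [e1, ← div_eq_inv_mul, le_div_iff₀ hκ]
        exact mul_le_mul_of_nonneg_left e2 (hf _)
    _ ≤ _ := setIntegral_mono_set hfInt'
        (Filter.Eventually.of_forall fun p => by
          have := hf (graphFlat ℓ p); have := hW0 p; simp only [Pi.zero_apply]; positivity)
        (Filter.Eventually.of_forall hSsub)

end Terms

section Solutions

/-- `u` is a `C¹` solution, with `C¹` time derivative, of `∂ₜu + ⟨H, ∇u⟩ + p u = 0` with initial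
value `a`. -/
structure IsTransportSolution {n : ℕ} (T : ℝ) (Ω : Set (Esp n)) (p a : Esp n → ℝ)
    (H : Esp n → Esp n) (u : Esp n → ℝ → ℝ) : Prop where
  contDiffOn : ContDiffOn ℝ 1 (fun q : Esp n × ℝ => u q.1 q.2) (closure Ω ×ˢ Icc 0 T)
  contDiffOn_deriv :
    ContDiffOn ℝ 1 (fun q : Esp n × ℝ => deriv (u q.1) q.2) (closure Ω ×ˢ Icc 0 T)
  eq : ∀ x ∈ Ω, ∀ t ∈ Ioo 0 T,
    deriv (u x) t + ⟪H x, gradient (fun z => u z t) x⟫ + p x * u x t = 0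
  initial_eq : ∀ x ∈ Ω, u x 0 = a x

namespace IsTransportSolution

variable {n : ℕ} {T : ℝ} {Ω : Set (Esp n)} {p a : Esp n → ℝ} {H H₁ H₂ : Esp n → Esp n}
  {u u₁ u₂ : Esp n → ℝ → ℝ}

theorem eq_fderiv (h : IsTransportSolution T Ω p a H u) {x : Esp n} (hx : x ∈ Ω) {t : ℝ}
    (ht : t ∈ Ioo 0 T) :
    deriv (u x) t + fderiv ℝ (fun z => u z t) x (H x) + p x * u x t = 0 := by
  have := h.eq x hx t ht
  rwa [inner_gradient_right, conj_trivial] at this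

theorem cylinder_mem_nhds (hΩ : IsOpen Ω) {x : Esp n} (hx : x ∈ Ω) {t : ℝ} (ht : t ∈ Ioo 0 T) :
    closure Ω ×ˢ Icc 0 T ∈ 𝓝 (x, t) :=
  prod_mem_nhds (Filter.mem_of_superset (hΩ.mem_nhds hx) subset_closure) (Icc_mem_nhds ht.1 ht.2)

theorem hasStrictFDerivAt_deriv (h : IsTransportSolution T Ω p a H u) (hΩ : IsOpen Ω) {x : Esp n}
    (hx : x ∈ Ω) {t : ℝ} (ht : t ∈ Ioo 0 T) :
    HasStrictFDerivAt (fun q : Esp n × ℝ => deriv (u q.1) q.2)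
      (fderiv ℝ (fun q : Esp n × ℝ => deriv (u q.1) q.2) (x, t)) (x, t) :=
  (h.contDiffOn_deriv.contDiffAt (cylinder_mem_nhds hΩ hx ht)).hasStrictFDerivAt one_ne_zero

theorem time_derivative (h : IsTransportSolution T Ω p a H u) (hΩ : IsOpen Ω) {x : Esp n}
    (hx : x ∈ Ω) {t : ℝ} (ht : t ∈ Ioo 0 T) :
    fderiv ℝ (fun q : Esp n × ℝ => deriv (u q.1) q.2) (x, t) (H x, 1)
      + p x * deriv (u x) t = 0 := by
  refine transport_time_derivative ?_ (h.hasStrictFDerivAt_deriv hΩ hx ht) ?_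
  · filter_upwards [(hΩ.prod isOpen_Ioo).mem_nhds (mk_mem_prod hx ht)] with q hq
    exact (h.contDiffOn.contDiffAt (cylinder_mem_nhds hΩ hq.1 hq.2)).differentiableAt one_ne_zero
  · filter_upwards [isOpen_Ioo.mem_nhds ht] with τ hτ using h.eq_fderiv hx hτ

theorem initial (h : IsTransportSolution T Ω p a H u) (hΩ : IsOpen Ω) (hT : 0 < T) {x : Esp n}
    (hx : x ∈ Ω) : deriv (u x) 0 + fderiv ℝ a x (H x) + p x * a x = 0 :=
  transport_initial hΩ hT h.contDiffOn h.contDiffOn_deriv.continuousOn hx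
    (fun _ ht => h.eq_fderiv hx ht) h.initial_eq

theorem initial_sub (h₁ : IsTransportSolution T Ω p a H₁ u₁)
    (h₂ : IsTransportSolution T Ω p a H₂ u₂) (hΩ : IsOpen Ω) (hT : 0 < T) {x : Esp n}
    (hx : x ∈ Ω) : deriv (u₁ x) 0 - deriv (u₂ x) 0 = -fderiv ℝ a x (H₁ x - H₂ x) := by
  rw [map_sub]
  linarith [h₁.initial hΩ hT hx, h₂.initial hΩ hT hx]

/-- The transport equation for the difference of the time derivatives of two solutions. -/
theorem abs_fderiv_sub_le (h₁ : IsTransportSolution T Ω p a H₁ u₁)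
    (h₂ : IsTransportSolution T Ω p a H₂ u₂) (hΩ : IsOpen Ω) (hΩb : Bornology.IsBounded Ω)
    {Cp : ℝ} {x : Esp n} (hCp : |p x| ≤ Cp) (hx : x ∈ Ω) {t : ℝ} (ht : t ∈ Ioo 0 T) :
    |fderiv ℝ (fun q : Esp n × ℝ => deriv (u₁ q.1) q.2 - deriv (u₂ q.1) q.2) (x, t) (H₁ x, 1)| ≤
      Cp * |deriv (u₁ x) t - deriv (u₂ x) t|
        + ‖H₁ x - H₂ x‖ * ⨆ x : Ω, ‖gradient (fun z => deriv (u₂ z) t) (x : Esp n)‖ := by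
  have d1 := (h₁.hasStrictFDerivAt_deriv hΩ hx ht).hasFDerivAt
  have d2 := (h₂.hasStrictFDerivAt_deriv hΩ hx ht).hasFDerivAt
  have e1 := h₁.time_derivative hΩ hx ht
  have e2 := h₂.time_derivative hΩ hx ht
  have hg := (spatial_gradient_sup (w := fun z t => deriv (u₂ z) t) hΩ hΩb h₂.contDiffOn_deriv).2 x hx t ht
  have d3 : fderiv ℝ (fun z => deriv (u₂ z) t) x = _ := d2.slice_left.fderiv
  set W₁ := fderiv ℝ (fun q : Esp n × ℝ => deriv (u₁ q.1) q.2) (x, t)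
  set W₂ := fderiv ℝ (fun q : Esp n × ℝ => deriv (u₂ q.1) q.2) (x, t)
  have e3 : fderiv ℝ (fun q : Esp n × ℝ => deriv (u₁ q.1) q.2 - deriv (u₂ q.1) q.2) (x, t)
      = W₁ - W₂ := (d1.sub d2).fderiv
  have e4 : W₂ (H₁ x, 1) = W₂ (H₂ x, 1) + fderiv ℝ (fun z => deriv (u₂ z) t) x (H₁ x - H₂ x) := by
    rw [d3, ContinuousLinearMap.comp_apply, ContinuousLinearMap.inl_apply, ← map_add]
    simp
  have e5 : (W₁ - W₂) (H₁ x, 1) = -(p x * (deriv (u₁ x) t - deriv (u₂ x) t))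
      - fderiv ℝ (fun z => deriv (u₂ z) t) x (H₁ x - H₂ x) := by
    rw [sub_apply, e4]
    linarith
  rw [e3, e5]
  refine (abs_sub _ _).trans (add_le_add ?_ ?_)
  · rw [abs_neg, abs_mul]
    exact mul_le_mul_of_nonneg_right hCp (abs_nonneg _)
  · rw [mul_comm]
    exact (ContinuousLinearMap.le_opNorm _ _).trans
      (mul_le_mul_of_nonneg_right hg (norm_nonneg _))

end IsTransportSolution

end Solutions

section Energy

variable {d : ℕ} {T ρ₀ c ρ η M L γ Cp M₀ lam : ℝ} {ℓ : Esp d → ℝ} {Ω : Set (Esp (d + 1))}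
  {p a : Esp (d + 1) → ℝ} {H₁ H₂ : Esp (d + 1) → Esp (d + 1)} {u₁ u₂ : Esp (d + 1) → ℝ → ℝ}

theorem drift_energy_estimate (hT : 0 < T) (hΩo : IsOpen Ω) (hΩb : Bornology.IsBounded Ω)
    (hΩsub : ∀ (x' : Esp d) (xn : ℝ), ‖x'‖ < ρ₀ → ℓ x' - c < xn → xn < ℓ x' →
      graphMk d x' xn ∈ Ω)
    (hℓ : ContDiffOn ℝ 2 ℓ (closedBall 0 ρ₀)) (hL : ∀ x ∈ ball (0 : Esp d) ρ₀, ‖fderiv ℝ ℓ x‖ ≤ L)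
    (hL0 : 0 ≤ L) (hM : 0 ≤ M)
    (hρ : 0 < ρ) (hρρ₀ : ρ < ρ₀) (hη : 0 < η) (hηρ : η < ρ ^ 2) (hηc : η < c)
    (hCp : ∀ x ∈ closure Ω, |p x| ≤ Cp)
    {U : Set (Esp (d + 1))} (hUo : IsOpen U) (hΩU : closure Ω ⊆ U) (hH₁ : ContDiffOn ℝ 1 H₁ U)
    (hH₁M : ∀ x ∈ U, ‖H₁ x‖ ≤ M) (hDH₁ : ∀ x ∈ U, ‖fderiv ℝ H₁ x‖ ≤ M)
    (hH₂ : ContinuousOn H₂ (closure Ω)) (hγ0 : 0 ≤ γ)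
    (hγ : ∀ x s, ‖x‖ ≤ ρ → s ∈ Icc (-η) 0 →
      γ ≤ driftVer ℓ H₁ (x, s) - 2 * ⟪x, driftHor ℓ H₁ (x, s)⟫ - η / T)
    (hpos : ∀ x s, ‖x‖ ≤ ρ → s ∈ Icc (-η) 0 → 0 ≤ driftVer ℓ H₁ (x, s))
    (h₁ : IsTransportSolution T Ω p a H₁ u₁) (h₂ : IsTransportSolution T Ω p a H₂ u₂)
    (hM₀ : ∫ t in Ioo 0 T,
      (⨆ x : Ω, ‖gradient (fun z => deriv (u₂ z) t) (x : Esp (d + 1))‖) ^ 2 ≤ M₀ ^ 2)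
    (k : ℕ) (hlam : 0 < lam)
    (hlam' : lam ≤ (k + 2) / η * γ - 2 * Cp - (d + 1) * (M * (1 + L))) :
    ∫ q, (deriv (u₁ (graphFlat ℓ q)) 0 - deriv (u₂ (graphFlat ℓ q)) 0) ^ 2
        * slabWeight η T k (q, 0)
        ∂((volume : Measure (Esp d)).prod (volume.restrict (Ioo (-η) 0))) ≤
      η ^ (k + 2) * M * (∫ t in Ioo 0 T, ∫ x' in ball (0 : Esp d) ρ₀,
        (deriv (u₁ (graphMk d x' (ℓ x'))) t - deriv (u₂ (graphMk d x' (ℓ x'))) t) ^ 2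
          * omegaW d ℓ x') +
      lam⁻¹ * ((∫ q, ‖H₁ (graphFlat ℓ q) - H₂ (graphFlat ℓ q)‖ ^ 2 * slabWeight η T k (q, 0)
        ∂((volume : Measure (Esp d)).prod (volume.restrict (Ioo (-η) 0)))) * M₀ ^ 2) := by
  have hcl : ∀ x s, ‖x‖ ≤ ρ → s ∈ Icc (-η) 0 → graphFlat ℓ (x, s) ∈ closure Ω := fun x s hx hs =>
    graphFlat_mem_closure hΩsub (hx.trans_lt hρρ₀) ⟨by linarith [hs.1], hs.2⟩
  have hin : ∀ x s, ‖x‖ < ρ → s ∈ Ioo (-η) 0 → graphFlat ℓ (x, s) ∈ Ω := fun x s hx hs =>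
    graphFlat_mem hΩsub (hx.trans hρρ₀) ⟨by linarith [hs.1], hs.2⟩
  have hmaps : MapsTo (graphFlat ℓ) (closedBall 0 ρ ×ˢ Icc (-η) 0) (closure Ω) :=
    fun q hq => hcl q.1 q.2 (mem_closedBall_zero_iff.1 hq.1) hq.2
  have hΦ : ContDiffOn ℝ 1 (graphFlat ℓ) (closedBall 0 ρ ×ˢ Icc (-η) 0) :=
    contDiffOn_graphFlat ((hℓ.of_le one_le_two).mono (closedBall_subset_closedBall hρρ₀.le)) _
  have hℓd : ∀ x, ‖x‖ < ρ₀ → DifferentiableAt ℝ ℓ x := fun x hx =>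
    (hℓ.contDiffAt (Filter.mem_of_superset (isOpen_ball.mem_nhds (mem_ball_zero_iff.2 hx))
      ball_subset_closedBall)).differentiableAt two_ne_zero
  obtain ⟨hA, hB⟩ := contDiffOn_drift (S := closedBall 0 ρ ×ˢ Icc (-η) 0) hℓ hH₁
    (fun q hq => (mem_closedBall_zero_iff.1 hq.1).trans_lt hρρ₀) fun q hq => hΩU (hmaps hq)
  set Y : Esp (d + 1) × ℝ → ℝ := fun q => deriv (u₁ q.1) q.2 - deriv (u₂ q.1) q.2 with hY
  have hYc : ContDiffOn ℝ 1 Y (closure Ω ×ˢ Icc 0 T) := h₁.contDiffOn_deriv.sub h₂.contDiffOn_deriv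
  set v : (Esp d × ℝ) × ℝ → ℝ := fun z => Y (graphFlat ℓ z.1, z.2) with hv
  have hvc : ContDiffOn ℝ 1 v ((closedBall 0 ρ ×ˢ Icc (-η) 0) ×ˢ Icc 0 T) :=
    hYc.comp ((hΦ.comp contDiff_fst.contDiffOn fun z hz => hz.1).prodMk contDiff_snd.contDiffOn)
      fun z hz => ⟨hmaps hz.1, hz.2⟩
  have hF : ContinuousOn (fun q => ‖H₁ (graphFlat ℓ q) - H₂ (graphFlat ℓ q)‖)
      (closedBall 0 ρ ×ˢ Icc (-η) 0) :=
    (((hH₁.continuousOn.mono hΩU).comp hΦ.continuousOn hmaps).sub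
      (hH₂.comp hΦ.continuousOn hmaps)).norm
  have hslab : ∀ x s, ‖x‖ < ρ → s ∈ Ioo (-η) 0 →
      closedBall (0 : Esp d) ρ ×ˢ Icc (-η) 0 ∈ 𝓝 (x, s) := fun x s hx hs =>
    prod_mem_nhds (Filter.mem_of_superset (isOpen_ball.mem_nhds (mem_ball_zero_iff.2 hx))
      ball_subset_closedBall) (Icc_mem_nhds hs.1 hs.2)
  have hdiv : ∀ x s, ‖x‖ < ρ → s ∈ Ioo (-η) 0 →
      |∑ i, fderiv ℝ (fun q => driftHor ℓ H₁ q i) (x, s) (EuclideanSpace.single i 1, 0)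
        + fderiv ℝ (driftVer ℓ H₁) (x, s) (0, 1)| ≤ (d + 1) * (M * (1 + L)) := by
    intro x s hx hs
    have hyU := hΩU (subset_closure (hin x s hx hs))
    exact abs_div_drift_le hM hL0 (hℓd x (hx.trans hρρ₀))
      (hL x (mem_ball_zero_iff.2 (hx.trans hρρ₀)))
      ((hH₁.contDiffAt (hUo.mem_nhds hyU)).differentiableAt one_ne_zero) (hDH₁ _ hyU)
      ((hB.contDiffAt (hslab x s hx hs)).differentiableAt one_ne_zero)
  have hpde : ∀ x s t, ‖x‖ < ρ → s ∈ Ioo (-η) 0 → t ∈ Ioo 0 T →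
      |fderiv ℝ v ((x, s), t) ((driftHor ℓ H₁ (x, s), driftVer ℓ H₁ (x, s)), 1)| ≤
        Cp * |v ((x, s), t)| + ‖H₁ (graphFlat ℓ (x, s)) - H₂ (graphFlat ℓ (x, s))‖ *
          ⨆ x : Ω, ‖gradient (fun z => deriv (u₂ z) t) (x : Esp (d + 1))‖ := by
    intro x s t hx hs ht
    have hy := hin x s hx hs
    have hYd : HasFDerivAt Y (fderiv ℝ Y (graphFlat ℓ (x, s), t)) (graphFlat ℓ (x, s), t) :=
      ((hYc.contDiffAt (IsTransportSolution.cylinder_mem_nhds hΩo hy ht)).differentiableAt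
        one_ne_zero).hasFDerivAt
    have hΦd : HasFDerivAt (graphFlat ℓ) (fderiv ℝ (graphFlat ℓ) (x, s)) (x, s) :=
      (hasFDerivAt_graphFlat (p := (x, s)) (hℓd x (hx.trans hρρ₀))).differentiableAt.hasFDerivAt
    have hpair : HasFDerivAt (fun z : (Esp d × ℝ) × ℝ => (graphFlat ℓ z.1, z.2)) _ ((x, s), t) :=
      (HasFDerivAt.comp ((x, s), t) (f := Prod.fst) hΦd hasFDerivAt_fst).prodMk
        (ContinuousLinearMap.snd ℝ (Esp d × ℝ) ℝ).hasFDerivAt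
    have hvd : HasFDerivAt v _ ((x, s), t) := HasFDerivAt.comp (g := Y) ((x, s), t) hYd hpair
    have e1 : fderiv ℝ v ((x, s), t) ((driftHor ℓ H₁ (x, s), driftVer ℓ H₁ (x, s)), 1)
        = fderiv ℝ Y (graphFlat ℓ (x, s), t) (H₁ (graphFlat ℓ (x, s)), 1) := by
      rw [hvd.fderiv, ← fderiv_graphFlat_drift H₁ (p := (x, s)) (hℓd x (hx.trans hρρ₀))]
      rfl
    rw [e1]
    exact h₁.abs_fderiv_sub_le h₂ hΩo hΩb (hCp _ (subset_closure hy)) hy ht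
  have main := weighted_energy_estimate hη hT hρ hηρ k hvc hA hB hF
    (spatial_gradient_sup (w := fun z t => deriv (u₂ z) t) hΩo hΩb h₂.contDiffOn_deriv).1 hdiv hγ0
    (fun x s hx hs => hγ x s hx.le (Ioo_subset_Icc_self hs)) hpde hlam hlam'
  refine main.trans (add_le_add ?_ ?_)
  · obtain ⟨CY, hCY⟩ := (hΩb.isCompact_closure.prod isCompact_Icc).exists_bound_of_continuousOn
      hYc.continuousOn
    have hbdry : ∀ x, ‖x‖ < ρ₀ → graphMk d x (ℓ x) ∈ closure Ω := by
      intro x hx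
      have := graphFlat_mem_closure hΩsub hx (s := 0) ⟨by linarith, le_rfl⟩
      simpa [graphFlat] using this
    have hω : ContinuousOn (omegaW d ℓ) (ball 0 ρ₀) := by
      have h1 : ContinuousOn (fderiv ℝ ℓ) (ball 0 ρ₀) :=
        (hℓ.mono ball_subset_closedBall).continuousOn_fderiv_of_isOpen isOpen_ball (by norm_num)
      have h2 : ContinuousOn (fun x => ‖gradient ℓ x‖) (ball 0 ρ₀) := by
        simpa only [norm_gradient] using h1.norm
      exact Real.continuous_sqrt.comp_continuousOn (continuousOn_const.add (h2.pow 2))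
    have hω0 : ∀ x, 0 ≤ omegaW d ℓ x := fun x => Real.sqrt_nonneg _
    refine iterated_integral_le_of_le_indicator (C := CY ^ 2 * √(1 + L ^ 2)) ?_ ?_ ?_ ?_
    · refine ContinuousOn.mul (ContinuousOn.pow ?_ 2)
        (hω.comp continuousOn_snd fun q hq => hq.2)
      refine hYc.continuousOn.comp (f := fun q : ℝ × Esp d => (graphMk d q.2 (ℓ q.2), q.1))
        (ContinuousOn.prodMk ?_ continuousOn_fst) fun q hq =>
          ⟨hbdry _ (mem_ball_zero_iff.1 hq.2), Ioo_subset_Icc_self hq.1⟩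
      refine (graphEquiv d).continuous.comp_continuousOn
        (f := fun q : ℝ × Esp d => (q.2, ℓ q.2)) (continuousOn_snd.prodMk ?_)
      exact hℓ.continuousOn.comp continuousOn_snd fun q hq => ball_subset_closedBall hq.2
    · intro t ht x hx
      have e1 := hCY (graphMk d x (ℓ x), t)
        ⟨hbdry x (mem_ball_zero_iff.1 hx), Ioo_subset_Icc_self ht⟩
      rw [abs_mul, abs_of_nonneg (hω0 x), abs_pow]
      refine mul_le_mul (pow_le_pow_left₀ (abs_nonneg _) e1 2) ?_ (hω0 x) (by positivity)
      refine Real.sqrt_le_sqrt (add_le_add_right ?_ 1)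
      rw [norm_gradient]
      exact pow_le_pow_left₀ (norm_nonneg _) (hL x hx) 2
    · intro t ht x
      by_cases hx : ‖x‖ ≤ ρ
      · exact mul_nonneg (mul_nonneg (sq_nonneg _) (slabWeight_nonneg _ _ _ _))
          (hpos x 0 hx ⟨by linarith, le_rfl⟩)
      · have hph := slabPhase_le hη.le hT (x := x) (le_refl (0 : ℝ)) ht.1.le
        have : ρ ^ 2 ≤ ‖x‖ ^ 2 := pow_le_pow_left₀ hρ.le (not_le.1 hx).le 2
        rw [slabWeight_eq_zero k (by linarith)]
        simp
    · intro t ht x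
      have hph := slabPhase_le hη.le hT (x := x) (le_refl (0 : ℝ)) ht.1.le
      by_cases hx : ‖x‖ ≤ ρ
      · rw [indicator_of_mem (mem_ball_zero_iff.2 (hx.trans_lt hρρ₀))]
        have hWle : slabWeight η T k ((x, 0), t) ≤ η ^ (k + 2) :=
          pow_le_pow_left₀ (le_max_right _ _)
            (max_le (hph.trans (by linarith [sq_nonneg ‖x‖])) hη.le) _
        have hBle : driftVer ℓ H₁ (x, 0) ≤ M * omegaW d ℓ x := by
          rw [driftVer_eq_inner, ← norm_graphNormal]
          exact (real_inner_le_norm _ _).trans (mul_le_mul_of_nonneg_right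
            (hH₁M _ (hΩU (hcl x 0 hx ⟨by linarith, le_rfl⟩))) (norm_nonneg _))
        have hvx : v ((x, 0), t) = deriv (u₁ (graphMk d x (ℓ x))) t
            - deriv (u₂ (graphMk d x (ℓ x))) t := by
          simp [hv, hY, graphFlat]
        rw [← hvx]
        calc _ ≤ v ((x, 0), t) ^ 2 * η ^ (k + 2) * (M * omegaW d ℓ x) :=
              mul_le_mul (mul_le_mul_of_nonneg_left hWle (sq_nonneg _)) hBle
                (hpos x 0 hx ⟨by linarith, le_rfl⟩) (by positivity)
          _ = _ := by ring
      · have : ρ ^ 2 ≤ ‖x‖ ^ 2 := pow_le_pow_left₀ hρ.le (not_le.1 hx).le 2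
        rw [slabWeight_eq_zero k (by linarith), mul_zero, zero_mul]
        refine indicator_nonneg (fun x _ => ?_) x
        have := hω0 x
        positivity
  · refine mul_le_mul_of_nonneg_left (mul_le_mul_of_nonneg_left hM₀ ?_) (inv_nonneg.2 hlam.le)
    exact integral_nonneg fun q => mul_nonneg (sq_nonneg _) (slabWeight_nonneg _ _ _ _)

end Energy

section Bump

variable {d : ℕ}

/-- The depth profile of the graph-type subdomain. -/
def graphDepth (η : ℝ) (x : Esp d) : ℝ := (η / 2 - ‖x‖ ^ 2) ^ 2

theorem contDiff_graphDepth (η : ℝ) {n : WithTop ℕ∞} : ContDiff ℝ n (graphDepth (d := d) η) :=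
  (contDiff_const.sub (contDiff_norm_sq ℝ)).pow 2

theorem gradient_graphDepth_eq_zero {η : ℝ} {x : Esp d} (hx : ‖x‖ ^ 2 = η / 2) :
    gradient (graphDepth η) x = 0 := by
  have h0 : HasFDerivAt (fun y : Esp d => η / 2 - ‖y‖ ^ 2) _ x :=
    (((contDiff_const.sub (contDiff_norm_sq ℝ)).differentiable one_ne_zero) x).hasFDerivAt
  have h1 : HasFDerivAt (graphDepth η) _ x := h0.pow 2
  have h2 : fderiv ℝ (graphDepth η) x = 0 := by
    rw [h1.fderiv, hx]
    simp
  rw [gradient, h2, map_zero]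

theorem graphDepth_pos {η : ℝ} {x : Esp d} (hx : ‖x‖ ^ 2 < η / 2) : 0 < graphDepth η x :=
  pow_pos (sub_pos.2 hx) 2

theorem graphDepth_le {η : ℝ} (hη : η ≤ 1) {x : Esp d} (hx : ‖x‖ ^ 2 < η / 2) :
    graphDepth η x ≤ η / 2 - ‖x‖ ^ 2 := by
  have h1 : 0 ≤ η / 2 - ‖x‖ ^ 2 := by linarith
  have h2 : η / 2 - ‖x‖ ^ 2 ≤ 1 := by linarith [sq_nonneg ‖x‖]
  unfold graphDepth
  nlinarith

theorem le_slabWeight_zero {η T : ℝ} (hη : 0 < η) (hη1 : η ≤ 1) (k : ℕ) {x : Esp d} {s : ℝ}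
    (hx : ‖x‖ ^ 2 < η / 2) (hs : -graphDepth η x < s) :
    (η / 2) ^ (k + 2) ≤ slabWeight η T k ((x, s), 0) := by
  have h1 := graphDepth_le hη1 hx
  refine pow_le_pow_left₀ (by positivity) (le_max_of_le_left ?_) _
  simp only [slabPhase, zero_div, sub_zero, mul_one]
  linarith

theorem zero_mem_frontier_graphDomain {ρ₁ : ℝ} (hρ₁ : 0 < ρ₁) {ℓ ℓt : Esp d → ℝ} (hℓ0 : ℓ 0 = 0)
    (hℓt : 0 < ℓt 0) {Ω : Set (Esp (d + 1))} (hsub : graphDomain d ρ₁ ℓ ℓt ⊆ Ω)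
    (h0 : (0 : Esp (d + 1)) ∉ Ω) : (0 : Esp (d + 1)) ∈ frontier (graphDomain d ρ₁ ℓ ℓt) := by
  refine ⟨?_, fun h => h0 (hsub (interior_subset h))⟩
  have h1 : Continuous fun r : ℝ => graphFlat ℓ (0, r) := by
    simp only [graphFlat_eq]; fun_prop
  have h2 := (h1.tendsto 0).mono_left (nhdsWithin_le_nhds (s := Iio 0))
  rw [graphFlat_zero hℓ0] at h2
  refine mem_closure_of_tendsto h2 ?_
  filter_upwards [Ioo_mem_nhdsLT (show -ℓt 0 < 0 by linarith)] with r hr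
  exact ⟨0, ℓ 0 + r, by simpa using hρ₁, by linarith [hr.1], by linarith [hr.2], rfl⟩

theorem sqrt_sum_le_sum_sqrt {ι : Type*} (s : Finset ι) {f : ι → ℝ} (hf : ∀ i, 0 ≤ f i) :
    √(∑ i ∈ s, f i) ≤ ∑ i ∈ s, √(f i) := by
  rw [Real.sqrt_le_left (Finset.sum_nonneg fun i _ => Real.sqrt_nonneg _)]
  calc ∑ i ∈ s, f i = ∑ i ∈ s, √(f i) ^ 2 := by simp only [Real.sq_sqrt (hf _)]
    _ ≤ _ := Finset.sum_sq_le_sq_sum_of_nonneg fun i _ => Real.sqrt_nonneg _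

end Bump

/-- **Theorem 1** (local Hölder stability for the inverse drift problem). -/
theorem theorem1_local_stability_inverse_drift
    (d : ℕ) (hd : 1 ≤ d) (T ρ₀ M δ₀ c : ℝ)
    (hT : 0 < T) (hρ₀ : 0 < ρ₀) (hM : 0 < M) (hδ₀ : 0 < δ₀) (hc : 0 < c)
    (ℓ : Esp d → ℝ) (hℓ : ContDiffOn ℝ 2 ℓ (closedBall 0 ρ₀)) (hℓ0 : ℓ 0 = 0)
    (Ω : Set (Esp (d+1))) (hΩo : IsOpen Ω) (hΩb : Bornology.IsBounded Ω)
    (hΩsub : ∀ (x' : Esp d) (xn : ℝ), ‖x'‖ < ρ₀ → ℓ x' - c < xn → xn < ℓ x' →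
      graphMk d x' xn ∈ Ω)
    (hΩdis : ∀ (x' : Esp d) (xn : ℝ), ‖x'‖ < ρ₀ → ℓ x' ≤ xn → xn < ℓ x' + c →
      graphMk d x' xn ∉ Ω)
    (p : Esp (d+1) → ℝ) (hp : ContinuousOn p (closure Ω))
    (hpb : ∃ Cp : ℝ, ∀ x ∈ closure Ω, |p x| ≤ Cp)
    (a : Fin (d+1) → Esp (d+1) → ℝ)
    (ha : ∀ k, ContDiffOn ℝ 1 (a k) (closure Ω))
    (hdet : ∀ x ∈ closure Ω,
      (Matrix.of fun (i k : Fin (d+1)) => gradient (a k) x i).det ≠ 0) :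
    ∃ ρ₁ ∈ Set.Ioo 0 ρ₀, ∃ ℓt : Esp d → ℝ,
      ContDiffOn ℝ 2 ℓt (closedBall 0 ρ₁) ∧
      (∀ x' : Esp d, ‖x'‖ < ρ₁ → 0 < ℓt x') ∧
      (∀ x' : Esp d, ‖x'‖ = ρ₁ → ℓt x' = 0 ∧ gradient ℓt x' = 0) ∧
      graphDomain d ρ₁ ℓ ℓt ⊆ Ω ∧
      (0 : Esp (d+1)) ∈ frontier (graphDomain d ρ₁ ℓ ℓt) ∩ frontier Ω ∧
      ∀ M₀ > (0:ℝ), ∃ C > (0:ℝ), ∃ θ ∈ Set.Ioo (0:ℝ) 1,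
        ∀ H₁ H₂ : Esp (d+1) → Esp (d+1),
          IsAdmissible M δ₀ (closure Ω) H₁ → δ₀ < ⟪H₁ 0, nuUp d ℓ 0⟫ →
          IsAdmissible M δ₀ (closure Ω) H₂ → δ₀ < ⟪H₂ 0, nuUp d ℓ 0⟫ →
          ∀ u₁ u₂ : Fin (d+1) → Esp (d+1) → ℝ → ℝ,
          (∀ k : Fin (d+1),
            (ContDiffOn ℝ 1 (fun q : Esp (d+1) × ℝ => u₁ k q.1 q.2) (closure Ω ×ˢ Icc 0 T) ∧
            ContDiffOn ℝ 1 (fun q : Esp (d+1) × ℝ => deriv (u₁ k q.1) q.2)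
              (closure Ω ×ˢ Icc 0 T) ∧
            (∀ x ∈ Ω, ∀ t ∈ Ioo 0 T,
              deriv (u₁ k x) t + ⟪H₁ x, gradient (fun z => u₁ k z t) x⟫
                + p x * u₁ k x t = 0) ∧
            (∀ x ∈ Ω, u₁ k x 0 = a k x)) ∧
            (∫ t in Ioo 0 T,
              (⨆ x : Ω, ‖gradient (fun z => deriv (u₁ k z) t) (x : Esp (d+1))‖) ^ 2)
              ≤ M₀ ^ 2) →
          (∀ k : Fin (d+1),
            (ContDiffOn ℝ 1 (fun q : Esp (d+1) × ℝ => u₂ k q.1 q.2) (closure Ω ×ˢ Icc 0 T) ∧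
            ContDiffOn ℝ 1 (fun q : Esp (d+1) × ℝ => deriv (u₂ k q.1) q.2)
              (closure Ω ×ˢ Icc 0 T) ∧
            (∀ x ∈ Ω, ∀ t ∈ Ioo 0 T,
              deriv (u₂ k x) t + ⟪H₂ x, gradient (fun z => u₂ k z t) x⟫
                + p x * u₂ k x t = 0) ∧
            (∀ x ∈ Ω, u₂ k x 0 = a k x)) ∧
            (∫ t in Ioo 0 T,
              (⨆ x : Ω, ‖gradient (fun z => deriv (u₂ k z) t) (x : Esp (d+1))‖) ^ 2)
              ≤ M₀ ^ 2) →
          Real.sqrt (∫ x in graphDomain d ρ₁ ℓ ℓt, ‖H₁ x - H₂ x‖ ^ 2) ≤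
            C * ((∑ k : Fin (d+1), (Real.sqrt (∫ t in Ioo 0 T, ∫ x' in ball (0 : Esp d) ρ₀,
                (deriv (u₁ k (graphMk d x' (ℓ x'))) t
                  - deriv (u₂ k (graphMk d x' (ℓ x'))) t) ^ 2
                  * omegaW d ℓ x')) ^ θ)
              + ∑ k : Fin (d+1), Real.sqrt (∫ t in Ioo 0 T, ∫ x' in ball (0 : Esp d) ρ₀,
                (deriv (u₁ k (graphMk d x' (ℓ x'))) t
                  - deriv (u₂ k (graphMk d x' (ℓ x'))) t) ^ 2
                  * omegaW d ℓ x')) := by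
  have hℓat : DifferentiableAt ℝ ℓ 0 :=
    (hℓ.contDiffAt (closedBall_mem_nhds 0 hρ₀)).differentiableAt two_ne_zero
  have h0cl : (0 : Esp (d+1)) ∈ closure Ω := by
    have := graphFlat_mem_closure hΩsub (x := 0) (s := 0) (by simpa using hρ₀)
      ⟨by linarith, le_rfl⟩
    rwa [graphFlat_zero hℓ0] at this
  have h0not : (0 : Esp (d+1)) ∉ Ω := by
    have := hΩdis 0 0 (by simpa using hρ₀) hℓ0.le (by linarith)
    have e : graphMk d 0 0 = 0 := map_zero (graphEquiv d)
    rwa [e] at this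
  obtain ⟨c₀, hc₀, hlow⟩ := exists_differentials_lower_bound hΩo h0cl
    (uniqueDiffWithinAt_closure_graph hρ₀ hc hℓat hℓ0 hΩsub) ha (hdet 0 h0cl)
  rw [eventually_nhdsWithin_iff] at hlow
  obtain ⟨ρ, η, hρ, hρρ₀, hη, hηρ, hη1, hηc, hηT, hpar⟩ :=
    exists_slab_parameters (M := M) hT hρ₀ hδ₀ hc hℓ hℓ0 hlow
  obtain ⟨L', hL'⟩ := (hℓ.of_le one_le_two).exists_bound_fderiv_interior
    (isCompact_closedBall (0 : Esp d) ρ₀)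
  set L := max L' 0 with hLdef
  have hL0 : 0 ≤ L := le_max_right _ _
  have hL : ∀ x ∈ ball (0 : Esp d) ρ₀, ‖fderiv ℝ ℓ x‖ ≤ L := fun x hx =>
    (hL' x (ball_subset_interior_closedBall hx)).trans (le_max_left _ _)
  obtain ⟨Cp, hCp⟩ := hpb
  set ρ₁ := √(η / 2) with hρ₁def
  have hρ₁sq : ρ₁ ^ 2 = η / 2 := Real.sq_sqrt (by positivity)
  have hρ₁ : 0 < ρ₁ := Real.sqrt_pos.2 (by positivity)
  have hρ₁ρ : ρ₁ < ρ := lt_of_pow_lt_pow_left₀ 2 hρ.le (by rw [hρ₁sq]; linarith)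
  have hlt : ∀ x : Esp d, ‖x‖ < ρ₁ → ‖x‖ ^ 2 < η / 2 := fun x hx => by
    rw [← hρ₁sq]; exact pow_lt_pow_left₀ hx (norm_nonneg _) two_ne_zero
  have hdepth : ∀ x : Esp d, ‖x‖ < ρ₁ → graphDepth η x ≤ η := fun x hx =>
    (graphDepth_le hη1 (hlt x hx)).trans (by linarith [sq_nonneg ‖x‖])
  have hD : graphDomain d ρ₁ ℓ (graphDepth η) ⊆ Ω := by
    rintro _ ⟨x, r, hx, hr1, hr2, rfl⟩
    exact hΩsub x r (hx.trans (hρ₁ρ.trans hρρ₀)) (by linarith [hdepth x hx]) hr2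
  refine ⟨ρ₁, ⟨hρ₁, hρ₁ρ.trans hρρ₀⟩, graphDepth η, (contDiff_graphDepth η).contDiffOn,
    fun x hx => graphDepth_pos (hlt x hx), fun x hx => ?_, hD,
    ⟨zero_mem_frontier_graphDomain hρ₁ hℓ0 (graphDepth_pos (by simpa using hη)) hD h0not,
      h0cl, fun h => h0not (interior_subset h)⟩, fun M₀ hM₀ => ?_⟩
  · have hx2 : ‖x‖ ^ 2 = η / 2 := by rw [hx, hρ₁sq]
    exact ⟨by simp [graphDepth, hx2], gradient_graphDepth_eq_zero hx2⟩
  set lam : ℝ := 2 * (d + 1) * M₀ ^ 2 / c₀ with hlamdef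
  have hlam : 0 < lam := by positivity
  obtain ⟨N, hN⟩ := exists_nat_ge
    ((lam + 2 * Cp + (d + 1) * (M * (1 + L))) * η / (δ₀ / 4))
  have hlam' : lam ≤ (N + 2) / η * (δ₀ / 4) - 2 * Cp - (d + 1) * (M * (1 + L)) := by
    rw [div_le_iff₀ (by positivity)] at hN
    have h1 : lam + 2 * Cp + (d + 1) * (M * (1 + L)) ≤ (N : ℝ) * (δ₀ / 4) / η :=
      (le_div_iff₀ hη).2 hN
    have h2 : ((N : ℝ) + 2) / η * (δ₀ / 4) = N * (δ₀ / 4) / η + 2 * (δ₀ / 4) / η := by ring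
    have h3 : 0 ≤ 2 * (δ₀ / 4) / η := by positivity
    linarith
  set κ : ℝ := (η / 2) ^ (N + 2) with hκdef
  have hκ : 0 < κ := by positivity
  set C2 : ℝ := κ⁻¹ * (2 / c₀ * (η ^ (N + 2) * M)) with hC2def
  have hC2 : 0 < C2 := by positivity
  refine ⟨√C2, Real.sqrt_pos.2 hC2, 1 / 2, by norm_num, ?_⟩
  intro H₁ H₂ hadm₁ hν₁ hadm₂ _ u₁ u₂ hu₁ hu₂
  obtain ⟨U₁, hU₁o, hU₁c, hΩU₁, hH₁, hH₁M, hDH₁, -⟩ := hadm₁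
  obtain ⟨U₂, -, -, hΩU₂, hH₂, -, -, -⟩ := hadm₂
  have hs₁ : ∀ k, IsTransportSolution T Ω p (a k) H₁ (u₁ k) := fun k =>
    ⟨(hu₁ k).1.1, (hu₁ k).1.2.1, (hu₁ k).1.2.2.1, (hu₁ k).1.2.2.2⟩
  have hs₂ : ∀ k, IsTransportSolution T Ω p (a k) H₂ (u₂ k) := fun k =>
    ⟨(hu₂ k).1.1, (hu₂ k).1.2.1, (hu₂ k).1.2.2.1, (hu₂ k).1.2.2.2⟩
  have hH₂c : ContinuousOn H₂ (closure Ω) := hH₂.continuousOn.mono hΩU₂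
  have hmaps : MapsTo (graphFlat ℓ) (closedBall 0 ρ ×ˢ Icc (-η) 0) (closure Ω) := fun q hq =>
    graphFlat_mem_closure hΩsub ((mem_closedBall_zero_iff.1 hq.1).trans_lt hρρ₀)
      ⟨by linarith [hq.2.1], hq.2.2⟩
  have hdrift : ∀ x s, ‖x‖ ≤ ρ → s ∈ Icc (-η) 0 →
      δ₀ / 2 ≤ driftVer ℓ H₁ (x, s) - 2 * ⟪x, driftHor ℓ H₁ (x, s)⟫ := fun x s hx hs =>
    drift_lower_bound hU₁o hU₁c hH₁ hH₁M hDH₁ (hΩU₁ h0cl) hδ₀ hν₁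
      (hΩU₁ (hmaps (x := (x, s)) ⟨mem_closedBall_zero_iff.2 hx, hs⟩)) (hpar x s hx hs).2
  have hpos : ∀ x s, ‖x‖ ≤ ρ → s ∈ Icc (-η) 0 → 0 ≤ driftVer ℓ H₁ (x, s) := by
    intro x s hx hs
    have h1 := (hpar x s hx hs).2
    have h2 : |⟪x, driftHor ℓ H₁ (x, s)⟫| ≤ ‖x‖ * M :=
      (abs_real_inner_le_norm _ _).trans (mul_le_mul_of_nonneg_left ((norm_symm_fst_le _).trans
        (hH₁M _ (hΩU₁ (hmaps (x := (x, s)) ⟨mem_closedBall_zero_iff.2 hx, hs⟩)))) (norm_nonneg _))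
    have h3 : 0 ≤ M * ‖graphFlat ℓ (x, s)‖ * ‖graphNormal ℓ x‖ := by positivity
    have h4 : 0 ≤ M * ‖graphNormal ℓ x - graphNormal ℓ 0‖ := by positivity
    linarith [hdrift x s hx hs, neg_abs_le ⟪x, driftHor ℓ H₁ (x, s)⟫]
  set μ : Measure (Esp d × ℝ) := (volume : Measure (Esp d)).prod (volume.restrict (Ioo (-η) 0))
    with hμ
  set data : Fin (d+1) → ℝ := fun k => ∫ t in Ioo 0 T, ∫ x' in ball (0 : Esp d) ρ₀,
    (deriv (u₁ k (graphMk d x' (ℓ x'))) t - deriv (u₂ k (graphMk d x' (ℓ x'))) t) ^ 2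
      * omegaW d ℓ x' with hdata
  have hdata0 : ∀ k, 0 ≤ data k := fun k => integral_nonneg fun t => integral_nonneg fun x =>
    mul_nonneg (sq_nonneg _) (Real.sqrt_nonneg _)
  set I : ℝ := ∫ q, ‖H₁ (graphFlat ℓ q) - H₂ (graphFlat ℓ q)‖ ^ 2 * slabWeight η T N (q, 0) ∂μ
    with hI
  have henergy : ∀ k, ∫ q, (deriv (u₁ k (graphFlat ℓ q)) 0 - deriv (u₂ k (graphFlat ℓ q)) 0) ^ 2
      * slabWeight η T N (q, 0) ∂μ ≤ η ^ (N + 2) * M * data k + lam⁻¹ * (I * M₀ ^ 2) := fun k =>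
    drift_energy_estimate hT hΩo hΩb hΩsub hℓ hL hL0 hM.le hρ hρρ₀ hη hηρ hηc hCp hU₁o hΩU₁ hH₁
      hH₁M hDH₁ hH₂c (by positivity) (fun x s hx hs => by linarith [hdrift x s hx hs]) hpos
      (hs₁ k) (hs₂ k) (hu₂ k).2 N hlam hlam'
  have hΦc : ContinuousOn (graphFlat ℓ) (closedBall 0 ρ ×ˢ Icc (-η) 0) :=
    (contDiffOn_graphFlat (hℓ.mono (closedBall_subset_closedBall hρρ₀.le)) _).continuousOn
  have hFint : Integrable (fun q => ‖H₁ (graphFlat ℓ q) - H₂ (graphFlat ℓ q)‖ ^ 2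
      * slabWeight η T N (q, 0)) μ :=
    integrable_mul_slabWeight_zero hη hT hρ hηρ N
      ((((hH₁.continuousOn.mono hΩU₁).comp hΦc hmaps).sub (hH₂c.comp hΦc hmaps)).norm.pow 2)
  have hvint : ∀ k, Integrable (fun q => (deriv (u₁ k (graphFlat ℓ q)) 0
      - deriv (u₂ k (graphFlat ℓ q)) 0) ^ 2 * slabWeight η T N (q, 0)) μ := by
    intro k
    refine integrable_mul_slabWeight_zero hη hT hρ hηρ N (ContinuousOn.pow ?_ 2)
    exact ((hs₁ k).contDiffOn_deriv.sub (hs₂ k).contDiffOn_deriv).continuousOn.comp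
      (f := fun q => (graphFlat ℓ q, (0 : ℝ))) (hΦc.prodMk continuousOn_const)
      fun q hq => ⟨hmaps hq, le_rfl, hT.le⟩
  have hlower : c₀ * I ≤ ∑ k, ∫ q, (deriv (u₁ k (graphFlat ℓ q)) 0
      - deriv (u₂ k (graphFlat ℓ q)) 0) ^ 2 * slabWeight η T N (q, 0) ∂μ := by
    rw [← integral_finsetSum _ fun k _ => hvint k, hI, ← integral_const_mul]
    refine integral_mono_ae (hFint.const_mul c₀) (integrable_finsetSum _ fun k _ => hvint k) ?_
    rw [hμ, slab_halfspace_eq]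
    filter_upwards [ae_restrict_mem (MeasurableSet.univ.prod measurableSet_Ioo)] with q hq
    obtain ⟨x, s⟩ := q
    have hs : s ∈ Ioo (-η) 0 := hq.2
    by_cases hx : ‖x‖ < ρ
    · have hyΩ : graphFlat ℓ (x, s) ∈ Ω :=
        graphFlat_mem hΩsub (hx.trans hρρ₀) ⟨by linarith [hs.1], hs.2⟩
      have h1 := (hpar x s hx.le (Ioo_subset_Icc_self hs)).1 hyΩ
        (H₁ (graphFlat ℓ (x, s)) - H₂ (graphFlat ℓ (x, s)))
      have h2 : ∀ k, (deriv (u₁ k (graphFlat ℓ (x, s))) 0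
          - deriv (u₂ k (graphFlat ℓ (x, s))) 0) ^ 2 = (fderiv ℝ (a k) (graphFlat ℓ (x, s))
            (H₁ (graphFlat ℓ (x, s)) - H₂ (graphFlat ℓ (x, s)))) ^ 2 := fun k => by
        rw [(hs₁ k).initial_sub (hs₂ k) hΩo hT hyΩ, neg_sq]
      simp only [h2, ← Finset.sum_mul, ← mul_assoc]
      exact mul_le_mul_of_nonneg_right h1 (slabWeight_nonneg _ _ _ _)
    · have hph := slabPhase_le hη.le hT (x := x) hs.2.le (le_refl (0 : ℝ))
      have : ρ ^ 2 ≤ ‖x‖ ^ 2 := pow_le_pow_left₀ hρ.le (not_lt.1 hx) 2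
      simp [slabWeight_eq_zero N (z := ((x, s), 0)) (by linarith)]
  have hIle : I ≤ 2 / c₀ * (η ^ (N + 2) * M) * ∑ k, data k := by
    have h1 := hlower.trans (Finset.sum_le_sum fun k _ => henergy k)
    rw [Finset.sum_add_distrib, ← Finset.mul_sum, Finset.sum_const, Finset.card_univ,
      Fintype.card_fin, nsmul_eq_mul] at h1
    have h2 : ((d + 1 : ℕ) : ℝ) * (lam⁻¹ * (I * M₀ ^ 2)) = c₀ / 2 * I := by
      rw [hlamdef]
      push_cast
      field_simp
    rw [h2] at h1
    have h3 : c₀ * I ≤ 2 * (η ^ (N + 2) * M * ∑ k, data k) := by linarith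
    calc I ≤ 2 * (η ^ (N + 2) * M * ∑ k, data k) / c₀ := by
          rw [le_div_iff₀ hc₀]; linarith
      _ = _ := by ring
  have hDle : ∫ x in graphDomain d ρ₁ ℓ (graphDepth η), ‖H₁ x - H₂ x‖ ^ 2
      ≤ C2 * ∑ k, data k := by
    refine (setIntegral_graphDomain_le (hρ₁ρ.trans hρρ₀).le hκ
      (hℓ.continuousOn.mono ball_subset_closedBall)
      (contDiff_graphDepth (n := 1) η).continuous hdepth
      (f := fun y => ‖H₁ y - H₂ y‖ ^ 2) (fun y => sq_nonneg _)
      (fun q => slabWeight_nonneg η T N (q, 0))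
      (fun x s hx hs _ => le_slabWeight_zero hη hη1 N (hlt x hx) hs) hFint).trans ?_
    rw [hC2def, mul_assoc κ⁻¹]
    exact mul_le_mul_of_nonneg_left hIle (by positivity)
  calc √(∫ x in graphDomain d ρ₁ ℓ (graphDepth η), ‖H₁ x - H₂ x‖ ^ 2)
      ≤ √(C2 * ∑ k, data k) := Real.sqrt_le_sqrt hDle
    _ = √C2 * √(∑ k, data k) := Real.sqrt_mul hC2.le _
    _ ≤ √C2 * (∑ k, √(data k) ^ (1 / 2 : ℝ) + ∑ k, √(data k)) := by
        refine mul_le_mul_of_nonneg_left ?_ (Real.sqrt_nonneg _)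
        refine (sqrt_sum_le_sum_sqrt _ hdata0).trans (le_add_of_nonneg_left ?_)
        exact Finset.sum_nonneg fun k _ => Real.rpow_nonneg (Real.sqrt_nonneg _) _
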